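/- arXiv:2406.07838 — 3 statements merged into one kernel-verified Lean document; each statement's English description precedes it below -/
import Mathlib

section
/- Let (N_k)_{k ≥ 0} be a sequence of positive integers of at most polynomial growth, i.e., there exist real a, p > 0 with N_k ≤ a·(k+1)^p for all k. For each n ≥ 1 let N^{(n)} = (N_0, …, N_{n−1}, −∑_{i=0}^{n−1} N_i). Then the ratio log K_n(N^{(n)}) / (sup_{f ∈ F_n(N^{(n)})} H(f)) tends to 1 as n → ∞. -/
open Finset

/-- The entropy-like function `h(t) = (t+1)·log(t+1) − t·log t` (with `h 0 = 0`
since `Real.log 0 = 0`). -/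
noncomputable def entH (t : ℝ) : ℝ := (t + 1) * Real.log (t + 1) - t * Real.log t

/-- `f` is an integer flow on the complete graph `k_{n+1}` with netflow `N`:
`f i j` is the flow on the edge `(i,j)` for `i < j`, it vanishes for `i ≥ j`,
and the netflow at each vertex `i` is `N i`. -/
def IsIntFlow (n : ℕ) (N : Fin (n + 1) → ℤ) (f : Fin (n + 1) → Fin (n + 1) → ℕ) : Prop :=
  (∀ i j : Fin (n + 1), ¬ i < j → f i j = 0) ∧
  ∀ i : Fin (n + 1),
    (∑ j : Fin (n + 1), if i < j then (f i j : ℤ) else 0) -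
      (∑ k : Fin (n + 1), if k < i then (f k i : ℤ) else 0) = N i

/-- The Kostant partition function: the number of integer flows on the complete
graph `k_{n+1}` with netflow `N`. -/
noncomputable def Kn (n : ℕ) (N : Fin (n + 1) → ℤ) : ℕ :=
  Nat.card {f : Fin (n + 1) → Fin (n + 1) → ℕ // IsIntFlow n N f}

/-- The flow polytope of the complete graph `k_{n+1}` with netflow `N`. -/
def FlowPolytope (n : ℕ) (N : Fin (n + 1) → ℝ) : Set (Fin (n + 1) → Fin (n + 1) → ℝ) :=
  {f | (∀ i j : Fin (n + 1), i < j → 0 ≤ f i j) ∧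
    (∀ i j : Fin (n + 1), ¬ i < j → f i j = 0) ∧
    ∀ i : Fin (n + 1),
      (∑ j : Fin (n + 1), if i < j then f i j else 0) -
        (∑ k : Fin (n + 1), if k < i then f k i else 0) = N i}

/-- The flow entropy `H(f)`. -/
noncomputable def flowEntropy (n : ℕ) (N : Fin (n + 1) → ℝ)
    (f : Fin (n + 1) → Fin (n + 1) → ℝ) : ℝ :=
  (∑ i : Fin (n + 1), ∑ j : Fin (n + 1), if i < j then entH (f i j) else 0) +
  ∑ j : Fin (n + 1), if 0 < (j : ℕ) ∧ (j : ℕ) < n then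
    entH (∑ i : Fin (n + 1), if i < j then (N i - f i j) else 0) else 0

/-- Partial sums `s_k = N_0 + ⋯ + N_k`. -/
def sPartial (n : ℕ) (N : Fin (n + 1) → ℤ) (k : ℕ) : ℤ :=
  ∑ j : Fin (n + 1), if (j : ℕ) ≤ k then N j else 0

/-- Extend `(N_0,…,N_{n−1})` to the netflow vector `(N_0,…,N_{n−1},−∑ N_i)`. -/
def extend (n : ℕ) (N : Fin n → ℤ) : Fin (n + 1) → ℤ := Fin.snoc N (-∑ i, N i)

/-!
The number `h t` is the entropy of the geometric law of mean `t`. If an integer flow is encoded edge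
by edge with the geometric codes whose means are those of a uniformly random flow `f`, Kraft's
inequality gives `log K ≤ ∑ h (𝔼 f i j) ≤ H (𝔼 f)`, and `𝔼 f` lies in the polytope.

Conversely, cut the vertices into blocks of `B` consecutive ones. A point `f` of the polytope
carries a total flow `t` between two blocks that are far apart. The integer part of `t` can be
redistributed arbitrarily over the `B ^ 2` edges between the two neighbouring blocks nested inside,
since no cut is then crossed by more flow than before, and the path edges `(k, k + 1)` restore the
netflow. By concavity of `h` and Stirling's formula, the number of these redistributions has
logarithm at least the entropy of `f` on the edges between the two blocks, up to
`O(log (supply + B ^ 2))`. Summing over pairs of blocks and bounding the short edges trivially, the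
total error is `O(((n / B) ^ 2 + n * B) * log (supply + B ^ 2))`. For `B ≈ n ^ (1 / 3)` this is
`n ^ (4 / 3 + o(1))`, whereas unit flow on all edges of length at most about `√n / 2` shows that the
maximum entropy is at least of order `n ^ (3 / 2)`.
-/

open scoped BigOperators

lemma entH_zero : entH 0 = 0 := by simp [entH]

lemma entH_nonneg {t : ℝ} (ht : 0 ≤ t) : 0 ≤ entH t := by
  have hlog : 0 ≤ Real.log (t + 1) := Real.log_nonneg (by linarith)
  rcases ht.eq_or_lt with rfl | hpos
  · simp [entH]
  · have hmono : Real.log t ≤ Real.log (t + 1) := Real.log_le_log hpos (by linarith)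
    unfold entH
    nlinarith

lemma entH_le_log_add_one {t : ℝ} (ht : 0 ≤ t) : entH t ≤ Real.log (t + 1) + 1 := by
  rcases ht.eq_or_lt with rfl | hpos
  · simp [entH]
  · have hratio := Real.log_le_sub_one_of_pos (show 0 < (t + 1) / t by positivity)
    rw [Real.log_div (by positivity) hpos.ne'] at hratio
    have hscaled := mul_le_mul_of_nonneg_left hratio ht
    rw [show t * ((t + 1) / t - 1) = 1 by field_simp; ring] at hscaled
    unfold entH
    linarith

/-- The description length `-log (1 + μ)⁻¹ (μ / (1 + μ)) ^ t` of the value `t` in the code adapted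
to the geometric law of mean `μ`. As a function of `t` it is the tangent line of `entH` at `μ`. -/
noncomputable def geomCost (μ t : ℝ) : ℝ :=
  Real.log (1 + μ) + t * (Real.log (1 + μ) - Real.log μ)

lemma geomCost_self (μ : ℝ) : geomCost μ μ = entH μ := by
  unfold geomCost entH
  rw [add_comm μ 1]
  ring

lemma entH_le_geomCost {μ t : ℝ} (hμ : 0 < μ) (ht : 0 ≤ t) : entH t ≤ geomCost μ t := by
  rcases ht.eq_or_lt with rfl | hpos
  · simpa [entH, geomCost] using Real.log_nonneg (by linarith)
  · have hinner := Real.log_le_sub_one_of_pos (show 0 < μ * (t + 1) / (t * (1 + μ)) by positivity)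
    have houter := Real.log_le_sub_one_of_pos (show 0 < (t + 1) / (1 + μ) by positivity)
    rw [Real.log_div (by positivity) (by positivity), Real.log_mul (by positivity) (by positivity),
      Real.log_mul (by positivity) (by positivity)] at hinner
    rw [Real.log_div (by positivity) (by positivity)] at houter
    have hscaled := mul_le_mul_of_nonneg_left hinner ht
    have hcancel :
        t * (μ * (t + 1) / (t * (1 + μ)) - 1) + ((t + 1) / (1 + μ) - 1) = 0 := by
      field_simp
      ring
    unfold entH geomCost
    linarith

lemma mul_entH_div {q r : ℝ} (hq : 0 < q) (hr : 0 < r) :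
    q * entH (r / q) = (q + r) * Real.log (q + r) - q * Real.log q - r * Real.log r := by
  have hsum : r / q + 1 = (q + r) / q := by field_simp; ring
  unfold entH
  rw [hsum, Real.log_div (by positivity) hq.ne', Real.log_div hr.ne' hq.ne']
  field_simp
  ring

lemma sum_entH_le_mul_entH_div {ι : Type*} {s : Finset ι} {g : ι → ℝ} {q r : ℝ} (hq : 0 < q)
    (hr : 0 < r) (hs : #s ≤ q) (hg : ∀ c ∈ s, 0 ≤ g c) (hsum : ∑ c ∈ s, g c ≤ r) :
    ∑ c ∈ s, entH (g c) ≤ q * entH (r / q) := by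
  set μ := r / q with hμ
  have hμ0 : 0 < μ := by positivity
  have hslope : 0 ≤ Real.log (1 + μ) - Real.log μ :=
    sub_nonneg.2 (Real.log_le_log hμ0 (by linarith))
  have hintercept : 0 ≤ Real.log (1 + μ) := Real.log_nonneg (by linarith)
  calc ∑ c ∈ s, entH (g c)
      ≤ ∑ c ∈ s, geomCost μ (g c) := sum_le_sum fun c hc => entH_le_geomCost hμ0 (hg c hc)
    _ = #s * Real.log (1 + μ) + (∑ c ∈ s, g c) * (Real.log (1 + μ) - Real.log μ) := by
        simp only [geomCost, sum_add_distrib, sum_mul, sum_const, nsmul_eq_mul]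
    _ ≤ q * Real.log (1 + μ) + r * (Real.log (1 + μ) - Real.log μ) := by gcongr
    _ = q * geomCost μ μ := by rw [geomCost, hμ]; field_simp
    _ = q * entH μ := by rw [geomCost_self]

lemma log_factorial_le_stirling {n : ℕ} (hn : n ≠ 0) :
    Real.log n.factorial ≤ n * Real.log n - n + Real.log n / 2 + 1 := by
  obtain ⟨k, rfl⟩ := Nat.exists_eq_succ_of_ne_zero hn
  have hanti : Real.log (Stirling.stirlingSeq (k + 1)) ≤ Real.log (Stirling.stirlingSeq 1) :=
    Stirling.log_stirlingSeq'_antitone (Nat.zero_le k)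
  have hone := Stirling.log_stirlingSeq_formula 1
  have hk := Stirling.log_stirlingSeq_formula (k + 1)
  rw [Real.log_mul two_ne_zero (by positivity), Real.log_div (by positivity) (Real.exp_ne_zero 1),
    Real.log_exp] at hk
  rw [Nat.factorial_one, Nat.cast_one, Real.log_one, mul_one, one_div (Real.exp 1), Real.log_inv,
    Real.log_exp] at hone
  simp only [Nat.succ_eq_add_one]
  linarith

lemma mul_entH_div_le_log_choose {q r : ℕ} (hq : q ≠ 0) (hr : r ≠ 0) :
    q * entH (r / q) ≤ Real.log ((q + r).choose r) + Real.log (q + r) + 2 := by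
  have hq1 : (1 : ℝ) ≤ q := by exact_mod_cast Nat.one_le_iff_ne_zero.2 hq
  have hr1 : (1 : ℝ) ≤ r := by exact_mod_cast Nat.one_le_iff_ne_zero.2 hr
  have hchoose : Real.log ((q + r).choose r) =
      Real.log (q + r).factorial - Real.log q.factorial - Real.log r.factorial := by
    have hpos : (0 : ℝ) < (q + r).choose r := by exact_mod_cast Nat.choose_pos (by omega)
    rw [← Nat.add_choose_mul_factorial_mul_factorial q r]
    push_cast
    rw [Real.log_mul (by positivity) (by positivity), Real.log_mul hpos.ne' (by positivity)]
    ring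
  have hsum := Stirling.le_log_factorial_stirling (n := q + r) (by omega)
  have hpi : 0 ≤ Real.log (2 * Real.pi) := Real.log_nonneg (by linarith [Real.pi_gt_three])
  have hlogq : Real.log q ≤ Real.log (q + r) := Real.log_le_log (by linarith) (by linarith)
  have hlogr : Real.log r ≤ Real.log (q + r) := Real.log_le_log (by linarith) (by linarith)
  rw [mul_entH_div (by linarith) (by linarith), hchoose]
  push_cast at hsum
  linarith [log_factorial_le_stirling hq, log_factorial_le_stirling hr, Real.log_nonneg hq1]

lemma choose_succ_le_sq_mul_multichoose {q : ℕ} (hq : q ≠ 0) (m : ℕ) :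
    (q + (m + 1)).choose (m + 1) ≤ (q + (m + 1)) ^ 2 * q.multichoose m := by
  obtain ⟨p, rfl⟩ := Nat.exists_eq_succ_of_ne_zero hq
  have hupper : (p + m + 2) * (p + m + 1).choose m = (p + m + 2).choose (m + 1) * (m + 1) :=
    Nat.add_one_mul_choose_eq _ _
  have hlower : (p + m + 1) * (p + m).choose m = (p + m + 1).choose m * (p + 1) := by
    have := Nat.choose_mul_succ_eq (p + m) m
    rw [show p + m + 1 - m = p + 1 by omega] at this
    linarith
  rw [Nat.multichoose_eq, show p.succ + m - 1 = p + m by omega,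
    show p.succ + (m + 1) = p + m + 2 by omega]
  calc (p + m + 2).choose (m + 1)
      ≤ (p + m + 2).choose (m + 1) * (m + 1) := Nat.le_mul_of_pos_right _ m.succ_pos
    _ = (p + m + 2) * (p + m + 1).choose m := hupper.symm
    _ ≤ (p + m + 2) * ((p + m + 1).choose m * (p + 1)) :=
        Nat.mul_le_mul_left _ (Nat.le_mul_of_pos_right _ p.succ_pos)
    _ = (p + m + 2) * ((p + m + 1) * (p + m).choose m) := by rw [hlower]
    _ ≤ (p + m + 2) ^ 2 * (p + m).choose m := by
        rw [← mul_assoc, sq]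
        gcongr
        omega

lemma sum_entH_le_log_multichoose {ι : Type*} {s : Finset ι} {g : ι → ℝ} {q : ℕ} (hq : q ≠ 0)
    (hs : #s ≤ q) (hg : ∀ c ∈ s, 0 ≤ g c) :
    ∑ c ∈ s, entH (g c) ≤ Real.log (q.multichoose ⌊∑ c ∈ s, g c⌋₊) +
      3 * (Real.log (q + (⌊∑ c ∈ s, g c⌋₊ + 1)) + 1) := by
  set m := ⌊∑ c ∈ s, g c⌋₊
  have hmulti : 0 < q.multichoose m := by
    rw [Nat.multichoose_eq]
    exact Nat.choose_pos (by omega)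
  have hjensen : ∑ c ∈ s, entH (g c) ≤ q * entH ((m + 1 : ℕ) / q) :=
    sum_entH_le_mul_entH_div (by positivity) (by positivity) (by exact_mod_cast hs) hg
      (by push_cast; exact (Nat.lt_floor_add_one _).le)
  have hchoose : Real.log ((q + (m + 1)).choose (m + 1)) ≤
      2 * Real.log (q + (m + 1)) + Real.log (q.multichoose m) := by
    have hsq : 2 * Real.log (q + (m + 1)) = Real.log ((q + (m + 1)) ^ 2) := by
      rw [Real.log_pow, Nat.cast_ofNat]
    rw [hsq, ← Real.log_mul (by positivity) (by positivity)]
    refine Real.log_le_log (by exact_mod_cast Nat.choose_pos (by omega)) ?_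
    exact_mod_cast choose_succ_le_sq_mul_multichoose hq m
  have hstirling := mul_entH_div_le_log_choose hq m.succ_ne_zero
  push_cast at hjensen hstirling
  linarith

/-- The probability of the value `v` under the geometric law on `ℕ` of mean `μ`; for `μ = 0` this is
the point mass at `0`. -/
noncomputable def geomWeight (μ : ℝ) (v : ℕ) : ℝ := (1 + μ)⁻¹ * (μ / (1 + μ)) ^ v

lemma geomWeight_nonneg {μ : ℝ} (hμ : 0 ≤ μ) (v : ℕ) : 0 ≤ geomWeight μ v := by
  unfold geomWeight
  positivity

lemma sum_geomWeight_le_one {μ : ℝ} (hμ : 0 ≤ μ) (u : Finset ℕ) :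
    ∑ v ∈ u, geomWeight μ v ≤ 1 := by
  have hratio : μ / (1 + μ) < 1 := (div_lt_one (by positivity)).2 (by linarith)
  have hsum := (hasSum_geometric_of_lt_one (by positivity) hratio).mul_left (1 + μ)⁻¹
  have htotal : (1 + μ)⁻¹ * (1 - μ / (1 + μ))⁻¹ = 1 := by field_simp; simp
  rw [htotal] at hsum
  exact sum_le_hasSum u (fun v _ => geomWeight_nonneg hμ v) hsum

lemma geomWeight_eq_exp_neg_geomCost {μ : ℝ} {v : ℕ} (hμ : 0 ≤ μ) (hv : μ = 0 → v = 0) :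
    geomWeight μ v = Real.exp (-geomCost μ v) := by
  rcases hμ.eq_or_lt with rfl | hpos
  · simp [geomWeight, geomCost, hv rfl]
  · rw [← Real.exp_log (show 0 < geomWeight μ v by unfold geomWeight; positivity)]
    unfold geomWeight geomCost
    rw [Real.log_mul (by positivity) (by positivity), Real.log_inv, Real.log_pow,
      Real.log_div hpos.ne' (by positivity)]
    ring_nf

lemma sum_prod_le_one {ι α : Type*} [Fintype ι] {w : ι → α → ℝ}
    (hw : ∀ p v, 0 ≤ w p v) (hsum : ∀ p (u : Finset α), ∑ v ∈ u, w p v ≤ 1)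
    (s : Finset (ι → α)) : ∑ y ∈ s, ∏ p, w p (y p) ≤ 1 := by
  classical
  calc ∑ y ∈ s, ∏ p, w p (y p)
      ≤ ∑ y ∈ Fintype.piFinset fun p => s.image (· p), ∏ p, w p (y p) :=
        sum_le_sum_of_subset_of_nonneg
          (fun y hy => Fintype.mem_piFinset.2 fun p => mem_image_of_mem _ hy)
          fun y _ _ => prod_nonneg fun p _ => hw p _
    _ = ∏ p, ∑ v ∈ s.image (· p), w p v := (prod_univ_sum _ _).symm
    _ ≤ 1 := prod_le_one (fun p _ => sum_nonneg fun v _ => hw p v) fun p _ => hsum p _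

lemma log_card_le_expect_of_sum_exp_neg_le_one {F : Type*} [Fintype F] [Nonempty F] {c : F → ℝ}
    (hc : ∑ t, Real.exp (-c t) ≤ 1) : Real.log (Fintype.card F) ≤ 𝔼 t, c t := by
  set K := (Fintype.card F : ℝ) with hK
  have hK0 : 0 < K := by rw [hK]; exact_mod_cast Fintype.card_pos
  have hpoint : ∀ t, Real.log K - c t + 1 ≤ K * Real.exp (-c t) := fun t => by
    have hexp : K * Real.exp (-c t) = Real.exp (Real.log K - c t) := by
      rw [sub_eq_add_neg, Real.exp_add, Real.exp_log hK0]
    exact hexp ▸ Real.add_one_le_exp _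
  have hsum : K * Real.log K - ∑ t, c t + K ≤ K := by
    calc K * Real.log K - ∑ t, c t + K = ∑ t, (Real.log K - c t + 1) := by
          simp [sum_add_distrib, sum_sub_distrib, hK]
      _ ≤ K * ∑ t, Real.exp (-c t) := by rw [mul_sum]; exact sum_le_sum fun t _ => hpoint t
      _ ≤ K := mul_le_of_le_one_right hK0.le hc
  rw [Fintype.expect_eq_sum_div_card, le_div_iff₀ hK0]
  linarith

theorem log_card_le_sum_entH_expect {ι F : Type*} [Fintype ι] [Fintype F] [Nonempty F]
    {x : F → ι → ℕ} (hx : Function.Injective x) :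
    Real.log (Fintype.card F) ≤ ∑ p, entH (𝔼 t, (x t p : ℝ)) := by
  classical
  set m : ι → ℝ := fun p => 𝔼 t, (x t p : ℝ) with hm
  have hm0 : ∀ p, 0 ≤ m p := fun p => expect_nonneg fun t _ => Nat.cast_nonneg _
  have hvanish : ∀ t p, m p = 0 → x t p = 0 := fun t p hp => by
    exact_mod_cast (expect_eq_zero_iff_of_nonneg fun t _ => Nat.cast_nonneg (x t p)).1 hp t
      (mem_univ t)
  have hkraft : ∑ t, Real.exp (-∑ p, geomCost (m p) (x t p)) ≤ 1 := by
    calc ∑ t, Real.exp (-∑ p, geomCost (m p) (x t p))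
        = ∑ t, ∏ p, geomWeight (m p) (x t p) := sum_congr rfl fun t _ => by
          rw [← sum_neg_distrib, Real.exp_sum]
          exact prod_congr rfl fun p _ =>
            (geomWeight_eq_exp_neg_geomCost (hm0 p) (hvanish t p)).symm
      _ = ∑ y ∈ univ.image x, ∏ p, geomWeight (m p) (y p) :=
          (sum_image (f := fun y => ∏ p, geomWeight (m p) (y p)) hx.injOn).symm
      _ ≤ 1 := sum_prod_le_one (fun p => geomWeight_nonneg (hm0 p))
          (fun p => sum_geomWeight_le_one (hm0 p)) _
  refine (log_card_le_expect_of_sum_exp_neg_le_one hkraft).trans_eq ?_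
  rw [expect_sum_comm]
  refine sum_congr rfl fun p _ => ?_
  rw [← geomCost_self]
  simp only [geomCost, expect_add_distrib, Fintype.expect_const, ← expect_mul, hm]

section Cuts

variable {R : Type*} {m n : ℕ}

/-- The net outflow `∑_{j > i} f_{ij} − ∑_{k < i} f_{ki}` of a flow `f` at the vertex `i`. -/
def netOutflow [AddCommGroup R] (f : Fin m → Fin m → R) (i : Fin m) : R :=
  (∑ j, if i < j then f i j else 0) - ∑ k, if k < i then f k i else 0

/-- The edges of the complete graph on `Fin m` crossing the cut between the vertices `0, …, k` and
the later ones. -/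
def cutEdges (m k : ℕ) : Finset (Fin m × Fin m) := {e | (e.1 : ℕ) ≤ k ∧ k < e.2}

/-- The total flow from the vertices `0, …, k` to the later ones. -/
def cutFlow [AddCommMonoid R] (f : Fin m → Fin m → R) (k : ℕ) : R :=
  ∑ e ∈ cutEdges m k, f e.1 e.2

lemma mem_cutEdges {k : ℕ} {e : Fin m × Fin m} :
    e ∈ cutEdges m k ↔ (e.1 : ℕ) ≤ k ∧ k < e.2 := by
  simp [cutEdges]

lemma cutFlow_natCast [Semiring R] (x : Fin m → Fin m → ℕ) (k : ℕ) :
    cutFlow (fun i j => (x i j : R)) k = ((cutFlow x k : ℕ) : R) := by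
  simp [cutFlow]

lemma sum_netOutflow_eq_cutFlow [AddCommGroup R] (f : Fin m → Fin m → R) (k : ℕ) :
    (∑ i : Fin m, if (i : ℕ) ≤ k then netOutflow f i else 0) = cutFlow f k := by
  have hsplit : ∀ i : Fin m, (if (i : ℕ) ≤ k then netOutflow f i else 0) =
      (∑ j, if (i : ℕ) ≤ k ∧ i < j then f i j else 0) -
        ∑ j, if (i : ℕ) ≤ k ∧ j < i then f j i else 0 := fun i => by
    by_cases hi : (i : ℕ) ≤ k <;> simp [hi, netOutflow]
  simp only [hsplit, sum_sub_distrib, cutFlow, cutEdges, sum_filter, Fintype.sum_prod_type]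
  rw [sum_comm (f := fun i j : Fin m => if (i : ℕ) ≤ k ∧ j < i then f j i else 0)]
  simp only [← sum_sub_distrib]
  refine sum_congr rfl fun i _ => sum_congr rfl fun j _ => ?_
  simp only [Fin.lt_def]
  split_ifs <;> first | omega | simp

lemma eq_of_sum_le_eq [AddCommGroup R] {g g' : Fin m → R}
    (h : ∀ k : ℕ, (∑ i : Fin m, if (i : ℕ) ≤ k then g i else 0) =
      ∑ i : Fin m, if (i : ℕ) ≤ k then g' i else 0) (i : Fin m) : g i = g' i := by
  induction i using WellFoundedLT.induction with
  | ind i ih =>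
    have hi := h i
    rw [← add_sum_erase _ _ (mem_univ i), ← add_sum_erase _ _ (mem_univ i), if_pos le_rfl,
      if_pos le_rfl, sum_congr rfl fun j hj => ?_] at hi
    · exact add_right_cancel hi
    · by_cases hji : (j : ℕ) ≤ i
      · rw [if_pos hji, if_pos hji, ih j (lt_of_le_of_ne hji (ne_of_mem_erase hj))]
      · rw [if_neg hji, if_neg hji]

lemma netOutflow_eq_iff_cutFlow_eq_sPartial [Ring R] {f : Fin (n + 1) → Fin (n + 1) → R}
    {M : Fin (n + 1) → ℤ} :
    (∀ i, netOutflow f i = M i) ↔ ∀ k, cutFlow f k = sPartial n M k := by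
  have hcast : ∀ k, ((sPartial n M k : ℤ) : R) =
      ∑ i : Fin (n + 1), if (i : ℕ) ≤ k then (M i : R) else 0 := fun k => by
    simp [sPartial]
  simp only [← sum_netOutflow_eq_cutFlow, hcast]
  exact ⟨fun h k => by simp only [h], eq_of_sum_le_eq⟩

lemma cutFlow_of_le [AddCommMonoid R] (f : Fin (n + 1) → Fin (n + 1) → R) {k : ℕ} (hk : n ≤ k) :
    cutFlow f k = 0 :=
  sum_eq_zero fun e he => by
    rw [mem_cutEdges] at he
    omega

lemma sPartial_of_le (M : Fin (n + 1) → ℤ) {k : ℕ} (hk : n ≤ k) : sPartial n M k = ∑ i, M i :=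
  sum_congr rfl fun i _ => if_pos (by omega)

/-- The total supply of a netflow: the sum of its positive parts. -/
def totalSupply (M : Fin m → ℤ) : ℕ := ∑ i, (M i).toNat

lemma sPartial_le_totalSupply (M : Fin (n + 1) → ℤ) (k : ℕ) : sPartial n M k ≤ totalSupply M := by
  unfold sPartial totalSupply
  push_cast
  refine sum_le_sum fun i _ => ?_
  split_ifs <;> omega

end Cuts

section FlowPolytope

variable {n : ℕ} {M : Fin (n + 1) → ℤ} {f : Fin (n + 1) → Fin (n + 1) → ℝ}

lemma nonneg_of_mem_flowPolytope {N : Fin (n + 1) → ℝ} (hf : f ∈ FlowPolytope n N)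
    (i j : Fin (n + 1)) : 0 ≤ f i j := by
  by_cases h : i < j
  · exact hf.1 i j h
  · exact (hf.2.1 i j h).ge

lemma cutFlow_of_mem_flowPolytope (hf : f ∈ FlowPolytope n fun i => (M i : ℝ)) (k : ℕ) :
    cutFlow f k = sPartial n M k :=
  netOutflow_eq_iff_cutFlow_eq_sPartial.1 hf.2.2 k

lemma sum_eq_zero_of_mem_flowPolytope (hf : f ∈ FlowPolytope n fun i => (M i : ℝ)) :
    ∑ i, M i = 0 := by
  rw [← sPartial_of_le M le_rfl]
  exact_mod_cast (cutFlow_of_mem_flowPolytope hf n).symm.trans (cutFlow_of_le f le_rfl)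

lemma sum_le_totalSupply_of_subset_cutEdges (hf : f ∈ FlowPolytope n fun i => (M i : ℝ)) {k : ℕ}
    {s : Finset (Fin (n + 1) × Fin (n + 1))} (hs : s ⊆ cutEdges (n + 1) k) :
    ∑ e ∈ s, f e.1 e.2 ≤ totalSupply M := by
  calc ∑ e ∈ s, f e.1 e.2 ≤ cutFlow f k :=
        sum_le_sum_of_subset_of_nonneg hs fun e _ _ => nonneg_of_mem_flowPolytope hf e.1 e.2
    _ = (sPartial n M k : ℝ) := cutFlow_of_mem_flowPolytope hf k
    _ ≤ totalSupply M := by exact_mod_cast sPartial_le_totalSupply M k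

lemma le_totalSupply_of_mem_flowPolytope (hf : f ∈ FlowPolytope n fun i => (M i : ℝ))
    (i j : Fin (n + 1)) : f i j ≤ totalSupply M := by
  by_cases h : i < j
  · simpa using sum_le_totalSupply_of_subset_cutEdges hf (s := {(i, j)})
      (singleton_subset_iff.2 (mem_cutEdges.2 ⟨le_refl (i : ℕ), h⟩))
  · rw [hf.2.1 i j h]
    positivity

lemma slack_eq_sum (hf : f ∈ FlowPolytope n fun i => (M i : ℝ)) (j : Fin (n + 1)) :
    (∑ i, if i < j then ((M i : ℝ) - f i j) else 0) =
      ∑ e ∈ {e : Fin (n + 1) × Fin (n + 1) | e.1 < j ∧ j < e.2}, f e.1 e.2 := by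
  obtain hj | ⟨k, hk⟩ : (j : ℕ) = 0 ∨ ∃ k : ℕ, (j : ℕ) = k + 1 := by
    cases (j : ℕ) <;> simp
  · rw [sum_eq_zero fun i _ => if_neg (by omega), filter_false_of_mem fun e _ => by omega,
      sum_empty]
  · have hlt : ∀ i : Fin (n + 1), i < j ↔ (i : ℕ) ≤ k := fun i => by omega
    have hcut := cutFlow_of_mem_flowPolytope hf k
    have hpart : (sPartial n M k : ℝ) = ∑ i, if i < j then (M i : ℝ) else 0 := by
      simp [sPartial, hlt]
    have hinflow : cutFlow f k = (∑ i, if i < j then f i j else 0) +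
        ∑ e ∈ {e : Fin (n + 1) × Fin (n + 1) | e.1 < j ∧ j < e.2}, f e.1 e.2 := by
      have : cutEdges (n + 1) k = (({i | i < j} : Finset (Fin (n + 1))) ×ˢ {j}) ∪
          ({e : Fin (n + 1) × Fin (n + 1) | e.1 < j ∧ j < e.2} : Finset _) := by
        ext e
        simp only [mem_cutEdges, mem_union, mem_product, mem_filter_univ, mem_singleton]
        omega
      rw [cutFlow, this, sum_union (disjoint_left.2 fun e => by
        simp only [mem_product, mem_filter_univ, mem_singleton]; omega), sum_product, sum_filter]
      simp only [sum_singleton]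
    calc (∑ i, if i < j then ((M i : ℝ) - f i j) else 0)
        = (∑ i, if i < j then (M i : ℝ) else 0) - ∑ i, if i < j then f i j else 0 := by
          rw [← sum_sub_distrib]
          exact sum_congr rfl fun i _ => by split_ifs <;> simp
      _ = _ := by rw [← hpart, ← hcut, hinflow, add_sub_cancel_left]

lemma slack_nonneg (hf : f ∈ FlowPolytope n fun i => (M i : ℝ)) (j : Fin (n + 1)) :
    0 ≤ ∑ i, if i < j then ((M i : ℝ) - f i j) else 0 := by
  rw [slack_eq_sum hf]
  exact sum_nonneg fun e _ => nonneg_of_mem_flowPolytope hf e.1 e.2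

lemma slack_le_totalSupply (hf : f ∈ FlowPolytope n fun i => (M i : ℝ)) (j : Fin (n + 1)) :
    (∑ i, if i < j then ((M i : ℝ) - f i j) else 0) ≤ totalSupply M := by
  rw [slack_eq_sum hf]
  refine sum_le_totalSupply_of_subset_cutEdges hf (k := j) fun e he => ?_
  rw [mem_filter_univ] at he
  exact mem_cutEdges.2 ⟨he.1.le, he.2⟩

lemma sum_entH_le_flowEntropy (hf : f ∈ FlowPolytope n fun i => (M i : ℝ)) :
    ∑ i, ∑ j, entH (f i j) ≤ flowEntropy n (fun i => (M i : ℝ)) f := by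
  refine (sum_congr rfl fun i _ => sum_congr rfl fun j _ => ?_).trans_le
    (le_add_of_nonneg_right (sum_nonneg fun j _ => ?_))
  · split_ifs with h
    · rfl
    · rw [hf.2.1 i j h, entH_zero]
  · split_ifs
    exacts [entH_nonneg (slack_nonneg hf j), le_rfl]

lemma natCast_mem_flowPolytope {x : Fin (n + 1) → Fin (n + 1) → ℕ} (hx : IsIntFlow n M x) :
    (fun i j => (x i j : ℝ)) ∈ FlowPolytope n fun i => (M i : ℝ) :=
  ⟨fun _ _ _ => Nat.cast_nonneg _, fun i j h => by simp [hx.1 i j h],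
    fun i => by simpa using congrArg (Int.cast (R := ℝ)) (hx.2 i)⟩

lemma finite_setOf_isIntFlow (M : Fin (n + 1) → ℤ) : {x | IsIntFlow n M x}.Finite :=
  (Set.finite_Iic fun _ _ => totalSupply M).subset fun _ hx i j => by
    exact_mod_cast le_totalSupply_of_mem_flowPolytope (natCast_mem_flowPolytope hx) i j

lemma expect_mem_flowPolytope {N : Fin (n + 1) → ℝ} {F : Type*} [Fintype F] [Nonempty F]
    {x : F → Fin (n + 1) → Fin (n + 1) → ℝ} (hx : ∀ t, x t ∈ FlowPolytope n N) :
    (fun i j => 𝔼 t, x t i j) ∈ FlowPolytope n N := by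
  refine ⟨fun i j h => expect_nonneg fun t _ => (hx t).1 i j h,
    fun i j h => by simp [(hx _).2.1 i j h], fun i => ?_⟩
  have hite : ∀ (p : Prop) [Decidable p] (g : F → ℝ),
      (if p then 𝔼 t, g t else 0) = 𝔼 t, if p then g t else 0 := fun p _ g => by
    split_ifs <;> simp
  simp only [hite, ← expect_sum_comm, ← expect_sub_distrib, (hx _).2.2 i, Fintype.expect_const]

theorem exists_log_Kn_le_flowEntropy (hK : Kn n M ≠ 0) :
    ∃ f ∈ FlowPolytope n fun i => (M i : ℝ),
      Real.log (Kn n M) ≤ flowEntropy n (fun i => (M i : ℝ)) f := by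
  have : Fintype {x // IsIntFlow n M x} := (finite_setOf_isIntFlow M).fintype
  have : Nonempty {x // IsIntFlow n M x} := (Nat.card_ne_zero.1 hK).1
  have hmean := expect_mem_flowPolytope fun t : {x // IsIntFlow n M x} =>
    natCast_mem_flowPolytope t.2
  refine ⟨_, hmean, le_trans ?_ (sum_entH_le_flowEntropy hmean)⟩
  have hinj : Function.Injective
      fun (t : {x // IsIntFlow n M x}) (e : Fin (n + 1) × Fin (n + 1)) => t.1 e.1 e.2 :=
    fun _ _ h => Subtype.ext (funext₂ fun i j => congrFun h (i, j))
  rw [Kn, Nat.card_eq_fintype_card, ← Fintype.sum_prod_type' fun i j => entH (𝔼 t, _)]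
  exact log_card_le_sum_entH_expect hinj

end FlowPolytope

section Completion

variable {n : ℕ} {M : Fin (n + 1) → ℤ} {x : Fin (n + 1) → Fin (n + 1) → ℕ}

/-- A table of edge values that fits below the netflow `M`: it vanishes off the edges of length at
least two and sends at most `M_0 + ⋯ + M_k` across the `k`-th cut. Such a table extends to an
integer flow by a choice of the values on the path edges `(k, k + 1)`. -/
structure IsPartialFlow (M : Fin (n + 1) → ℤ) (x : Fin (n + 1) → Fin (n + 1) → ℕ) : Prop where
  eq_zero : ∀ i j : Fin (n + 1), (j : ℕ) < i + 2 → x i j = 0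
  cutFlow_le : ∀ k < n, ((cutFlow x k : ℕ) : ℤ) ≤ sPartial n M k

/-- The integer flow with netflow `M` that agrees with `x` off the path edges `(k, k + 1)`. -/
def completion (M : Fin (n + 1) → ℤ) (x : Fin (n + 1) → Fin (n + 1) → ℕ)
    (i j : Fin (n + 1)) : ℕ :=
  if (i : ℕ) + 1 = j then (sPartial n M i - (cutFlow x i : ℕ)).toNat else x i j

lemma cutFlow_completion (hx : IsPartialFlow M x) {k : ℕ} (hk : k < n) :
    ((cutFlow (completion M x) k : ℕ) : ℤ) = sPartial n M k := by
  set e₀ : Fin (n + 1) × Fin (n + 1) := (⟨k, by omega⟩, ⟨k + 1, by omega⟩) with he₀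
  have hsplit : ∀ e ∈ cutEdges (n + 1) k, completion M x e.1 e.2 =
      x e.1 e.2 + if e = e₀ then (sPartial n M k - (cutFlow x k : ℕ)).toNat else 0 := by
    intro e he
    have hpath : e = e₀ ↔ (e.1 : ℕ) + 1 = e.2 := by
      rw [mem_cutEdges] at he
      simp only [he₀, Prod.ext_iff, Fin.ext_iff]
      omega
    by_cases h : e = e₀
    · rw [completion, if_pos (hpath.1 h), if_pos h, hx.eq_zero _ _ (by have := hpath.1 h; omega), h,
        zero_add]
    · rw [completion, if_neg (hpath.not.1 h), if_neg h, add_zero]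
  have hmem : e₀ ∈ cutEdges (n + 1) k := mem_cutEdges.2 ⟨le_refl k, k.lt_succ_self⟩
  rw [cutFlow, sum_congr rfl hsplit, sum_add_distrib, sum_ite_eq', if_pos hmem, Nat.cast_add,
    Int.toNat_of_nonneg (sub_nonneg.2 (hx.cutFlow_le k hk))]
  exact add_sub_cancel _ _

lemma isIntFlow_completion (hM : ∑ i, M i = 0) (hx : IsPartialFlow M x) :
    IsIntFlow n M (completion M x) := by
  refine ⟨fun i j hij => ?_, netOutflow_eq_iff_cutFlow_eq_sPartial.2 fun k => ?_⟩
  · rw [completion, if_neg (by omega), hx.eq_zero i j (by omega)]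
  rw [cutFlow_natCast]
  rcases lt_or_ge k n with hk | hk
  · exact cutFlow_completion hx hk
  · rw [cutFlow_of_le _ hk, sPartial_of_le M hk, hM, Nat.cast_zero, Int.cast_zero]

lemma completion_injOn : Set.InjOn (completion M) {x | IsPartialFlow M x} := by
  refine fun x hx y hy h => funext₂ fun i j => ?_
  by_cases hij : (i : ℕ) + 1 = j
  · rw [hx.eq_zero i j (by omega), hy.eq_zero i j (by omega)]
  · simpa [completion, hij] using congrFun₂ h i j

lemma card_le_Kn (hM : ∑ i, M i = 0) {T : Finset (Fin (n + 1) → Fin (n + 1) → ℕ)}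
    (hT : ∀ x ∈ T, IsPartialFlow M x) : #T ≤ Kn n M := by
  have hfin := finite_setOf_isIntFlow M
  have hKn : Kn n M = #hfin.toFinset :=
    (Nat.card_coe_set_eq {x | IsIntFlow n M x}).trans (Set.ncard_eq_toFinset_card _ hfin)
  rw [hKn]
  exact card_le_card_of_injOn (completion M)
    (fun x hx => hfin.mem_toFinset.2 (isIntFlow_completion hM (hT x hx)))
    (completion_injOn.mono hT)

end Completion

lemma card_piAntidiag_univ (ι : Type*) [Fintype ι] [DecidableEq ι] (m : ℕ) :
    #(piAntidiag (univ : Finset ι) m) = (Fintype.card ι).multichoose m := by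
  rw [← card_univ, ← card_finsuppAntidiag_nat_eq_multichoose, finsuppAntidiag]
  simp

section EdgeTable

variable {α : Type*} {m : ℕ} {ψ : α → Fin m × Fin m}

/-- The table of edge values with the value `g a` on the edge `ψ a` and zero elsewhere. -/
noncomputable def edgeTable (ψ : α → Fin m × Fin m) (g : α → ℕ) (i j : Fin m) : ℕ :=
  Function.extend ψ g 0 (i, j)

lemma edgeTable_injective (hψ : Function.Injective ψ) : Function.Injective (edgeTable ψ) :=
  fun g g' h => funext fun a => by
    simpa [edgeTable, hψ.extend_apply] using congrFun₂ h (ψ a).1 (ψ a).2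

lemma cutFlow_edgeTable [Fintype α] (hψ : Function.Injective ψ) (g : α → ℕ) (k : ℕ) :
    cutFlow (edgeTable ψ g) k = ∑ a with ψ a ∈ cutEdges m k, g a := by
  symm
  refine sum_of_injOn ψ hψ.injOn (fun a ha => (mem_filter.1 ha).2) (fun b hb hb' => ?_)
    fun a _ => (hψ.extend_apply g 0 a).symm
  refine Function.extend_apply' _ _ _ fun ⟨a, ha⟩ => hb' ⟨a, ?_, ha⟩
  simpa [ha] using hb

end EdgeTable

section Transport

variable {n : ℕ} {M : Fin (n + 1) → ℤ} {f : Fin (n + 1) → Fin (n + 1) → ℝ} {ι κ : Type*}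
  [Fintype κ] {S : ι → Finset (Fin (n + 1) × Fin (n + 1))}
  {φ : ι × κ → Fin (n + 1) × Fin (n + 1)}

lemma sum_filter_cutEdges_le_cutFlow [Fintype ι] (hf : ∀ i j, 0 ≤ f i j)
    (hS : (Set.univ : Set ι).PairwiseDisjoint S)
    (hnest : ∀ p c, ∀ e ∈ S p, e.1 ≤ (φ (p, c)).1 ∧ (φ (p, c)).2 ≤ e.2) {t : ι → κ → ℕ}
    (ht : ∀ p, ∑ c, t p c ≤ ∑ e ∈ S p, f e.1 e.2) (k : ℕ) :
    ((∑ σ with φ σ ∈ cutEdges (n + 1) k, t σ.1 σ.2 : ℕ) : ℝ) ≤ cutFlow f k := by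
  classical
  set P : Finset ι := {p | ∃ c, φ (p, c) ∈ cutEdges (n + 1) k}
  have hcross : P.biUnion S ⊆ cutEdges (n + 1) k := by
    refine biUnion_subset.2 fun p hp e he => ?_
    obtain ⟨c, hc⟩ := (mem_filter_univ p).1 hp
    obtain ⟨h₁, h₂⟩ := hnest p c e he
    rw [mem_cutEdges] at hc ⊢
    omega
  calc ((∑ σ with φ σ ∈ cutEdges (n + 1) k, t σ.1 σ.2 : ℕ) : ℝ)
      ≤ ((∑ σ ∈ P ×ˢ univ, t σ.1 σ.2 : ℕ) : ℝ) := by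
        refine Nat.cast_le.2 (sum_le_sum_of_subset fun σ hσ => ?_)
        exact mem_product.2 ⟨(mem_filter_univ _).2 ⟨σ.2, (mem_filter_univ σ).1 hσ⟩, mem_univ _⟩
    _ = ∑ p ∈ P, ((∑ c, t p c : ℕ) : ℝ) := by rw [sum_product, Nat.cast_sum]
    _ ≤ ∑ p ∈ P, ∑ e ∈ S p, f e.1 e.2 := sum_le_sum fun p _ => ht p
    _ = ∑ e ∈ P.biUnion S, f e.1 e.2 := (sum_biUnion (hS.subset (Set.subset_univ _))).symm
    _ ≤ cutFlow f k := sum_le_sum_of_subset_of_nonneg hcross fun e _ _ => hf e.1 e.2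

lemma isPartialFlow_edgeTable [Finite ι] (hf : f ∈ FlowPolytope n fun i => (M i : ℝ))
    (hS : (Set.univ : Set ι).PairwiseDisjoint S) (hφ : Function.Injective φ)
    (hlong : ∀ σ, ((φ σ).1 : ℕ) + 2 ≤ (φ σ).2)
    (hnest : ∀ p c, ∀ e ∈ S p, e.1 ≤ (φ (p, c)).1 ∧ (φ (p, c)).2 ≤ e.2) {t : ι → κ → ℕ}
    (ht : ∀ p, ∑ c, t p c ≤ ∑ e ∈ S p, f e.1 e.2) :
    IsPartialFlow M (edgeTable φ fun σ => t σ.1 σ.2) where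
  eq_zero i j hij := by
    refine Function.extend_apply' _ _ _ fun ⟨σ, hσ⟩ => ?_
    have hσlong := hlong σ
    simp only [hσ] at hσlong
    omega
  cutFlow_le k _ := by
    have := Fintype.ofFinite ι
    have hcut : cutFlow (edgeTable φ fun σ => t σ.1 σ.2) k =
        ∑ σ with φ σ ∈ cutEdges (n + 1) k, t σ.1 σ.2 := cutFlow_edgeTable hφ _ k
    have hle := sum_filter_cutEdges_le_cutFlow (nonneg_of_mem_flowPolytope hf) hS hnest ht k
    rw [← hcut, cutFlow_of_mem_flowPolytope hf] at hle
    exact_mod_cast hle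

theorem prod_multichoose_le_Kn [Fintype ι] (hf : f ∈ FlowPolytope n fun i => (M i : ℝ))
    (hS : (Set.univ : Set ι).PairwiseDisjoint S) (hφ : Function.Injective φ)
    (hlong : ∀ σ, ((φ σ).1 : ℕ) + 2 ≤ (φ σ).2)
    (hnest : ∀ p c, ∀ e ∈ S p, e.1 ≤ (φ (p, c)).1 ∧ (φ (p, c)).2 ≤ e.2) :
    ∏ p, (Fintype.card κ).multichoose ⌊∑ e ∈ S p, f e.1 e.2⌋₊ ≤ Kn n M := by
  classical
  set T : Finset (ι → κ → ℕ) :=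
    Fintype.piFinset fun p => piAntidiag univ ⌊∑ e ∈ S p, f e.1 e.2⌋₊ with hT
  set table : (ι → κ → ℕ) → Fin (n + 1) → Fin (n + 1) → ℕ :=
    fun t => edgeTable φ fun σ => t σ.1 σ.2
  have hinj : Function.Injective table := fun t t' h =>
    funext₂ fun p c => congrFun (edgeTable_injective hφ h) (p, c)
  have hpartial : ∀ x ∈ T.image table, IsPartialFlow M x := fun x hx => by
    obtain ⟨t, ht, rfl⟩ := mem_image.1 hx
    refine isPartialFlow_edgeTable hf hS hφ hlong hnest fun p => ?_
    rw [(mem_piAntidiag.1 (Fintype.mem_piFinset.1 ht p)).1]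
    exact Nat.floor_le (sum_nonneg fun e _ => nonneg_of_mem_flowPolytope hf e.1 e.2)
  calc ∏ p, (Fintype.card κ).multichoose ⌊∑ e ∈ S p, f e.1 e.2⌋₊ = #T := by
        rw [hT, Fintype.card_piFinset]
        exact prod_congr rfl fun p _ => (card_piAntidiag_univ κ _).symm
    _ = #(T.image table) := (card_image_of_injective T hinj).symm
    _ ≤ Kn n M := card_le_Kn (sum_eq_zero_of_mem_flowPolytope hf) hpartial

end Transport

section Blocks

variable {n B : ℕ} {M : Fin (n + 1) → ℤ} {f : Fin (n + 1) → Fin (n + 1) → ℝ}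

/-- The pairs of blocks at distance at least four, when the vertices `0, …, n` are cut into blocks
of `B` consecutive ones and the block of a vertex `i` is numbered `i / B`. -/
abbrev FarBlocks (n B : ℕ) : Type :=
  {p : Fin (n / B + 1) × Fin (n / B + 1) // (p.1 : ℕ) + 4 ≤ p.2}

/-- The edges from the first to the second block of a pair. -/
def blockEdges (p : FarBlocks n B) : Finset (Fin (n + 1) × Fin (n + 1)) :=
  {e | (e.1 : ℕ) / B = p.1.1 ∧ (e.2 : ℕ) / B = p.1.2}

/-- The `B ^ 2` edges from the successor of the first block of a pair to the predecessor of the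
second one. Every edge in `blockEdges p` passes over all of them. -/
def innerEdge (σ : FarBlocks n B × (Fin B × Fin B)) : Fin (n + 1) × Fin (n + 1) :=
  have hlast : B * (σ.1.1.2 : ℕ) ≤ n :=
    (Nat.mul_le_mul_left B (Nat.lt_succ_iff.1 σ.1.1.2.2)).trans (Nat.mul_div_le n B)
  have hfirst : B * ((σ.1.1.1 : ℕ) + 1) + B ≤ B * σ.1.1.2 :=
    Nat.mul_le_mul_left B (show (σ.1.1.1 : ℕ) + 1 + 1 ≤ σ.1.1.2 by have := σ.1.2; omega)
  have hpred : B * ((σ.1.1.2 : ℕ) - 1) + B ≤ B * σ.1.1.2 :=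
    Nat.mul_le_mul_left B (show (σ.1.1.2 : ℕ) - 1 + 1 ≤ σ.1.1.2 by have := σ.1.2; omega)
  (⟨B * ((σ.1.1.1 : ℕ) + 1) + σ.2.1, by omega⟩, ⟨B * ((σ.1.1.2 : ℕ) - 1) + σ.2.2, by omega⟩)

lemma mem_blockEdges {p : FarBlocks n B} {e : Fin (n + 1) × Fin (n + 1)} :
    e ∈ blockEdges p ↔ (e.1 : ℕ) / B = p.1.1 ∧ (e.2 : ℕ) / B = p.1.2 := by
  simp [blockEdges]

lemma pairwiseDisjoint_blockEdges :
    (Set.univ : Set (FarBlocks n B)).PairwiseDisjoint blockEdges := by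
  refine fun p _ p' _ hne => disjoint_left.2 fun e he he' => hne ?_
  rw [mem_blockEdges] at he he'
  exact Subtype.ext (Prod.ext (Fin.ext (he.1.symm.trans he'.1)) (Fin.ext (he.2.symm.trans he'.2)))

lemma card_blockEdges_le (hB : B ≠ 0) (p : FarBlocks n B) : #(blockEdges p) ≤ B * B := by
  have hmod : ∀ k, k % B < B := fun k => Nat.mod_lt k (Nat.pos_of_ne_zero hB)
  have hinj : Set.InjOn (fun e : Fin (n + 1) × Fin (n + 1) => ((e.1 : ℕ) % B, (e.2 : ℕ) % B))
      (blockEdges p) := by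
    intro e he e' he' h
    rw [mem_coe, mem_blockEdges] at he he'
    simp only [Prod.ext_iff] at h
    exact Prod.ext (Fin.ext (Nat.ext_div_mod (he.1.trans he'.1.symm) h.1))
      (Fin.ext (Nat.ext_div_mod (he.2.trans he'.2.symm) h.2))
  calc #(blockEdges p) ≤ #(range B ×ˢ range B) := card_le_card_of_injOn _
        (fun e _ => mem_product.2 ⟨mem_range.2 (hmod _), mem_range.2 (hmod _)⟩) hinj
    _ = B * B := by rw [card_product, card_range]

lemma innerEdge_injective : Function.Injective (innerEdge (n := n) (B := B)) := by
  rintro ⟨p, r, s⟩ ⟨p', r', s'⟩ h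
  have hdivmod : ∀ {a b : ℕ} {r r' : Fin B}, B * a + r = B * b + r' → a = b ∧ r = r' := by
    intro a b r r' hab
    have hdiv := congrArg (· / B) hab
    have hmod := congrArg (· % B) hab
    simp only [Nat.mul_add_div (Fin.pos r), Nat.div_eq_of_lt (Fin.is_lt _), add_zero,
      Nat.mul_add_mod, Nat.mod_eq_of_lt (Fin.is_lt _)] at hdiv hmod
    exact ⟨hdiv, Fin.ext hmod⟩
  obtain ⟨h₁, h₂⟩ := Prod.ext_iff.1 h
  obtain ⟨hp₁, rfl⟩ := hdivmod (Fin.ext_iff.1 h₁)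
  obtain ⟨hp₂, rfl⟩ := hdivmod (Fin.ext_iff.1 h₂)
  have := p'.2
  dsimp only at hp₁ hp₂
  obtain rfl : p = p' := Subtype.ext (Prod.ext (Fin.ext (by omega)) (Fin.ext (by omega)))
  rfl

lemma innerEdge_long (σ : FarBlocks n B × (Fin B × Fin B)) :
    ((innerEdge σ).1 : ℕ) + 2 ≤ (innerEdge σ).2 := by
  have hblocks : B * ((σ.1.1.1 : ℕ) + 1) + 2 * B ≤ B * ((σ.1.1.2 : ℕ) - 1) := by
    have := σ.1.2
    rw [mul_comm 2 B, ← mul_add]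
    exact Nat.mul_le_mul_left B (by omega)
  have := σ.2.1.2
  simp only [innerEdge]
  omega

lemma innerEdge_nested (p : FarBlocks n B) (c : Fin B × Fin B) {e : Fin (n + 1) × Fin (n + 1)}
    (he : e ∈ blockEdges p) : e.1 ≤ (innerEdge (p, c)).1 ∧ (innerEdge (p, c)).2 ≤ e.2 := by
  rw [mem_blockEdges] at he
  have hfirst := Nat.lt_mul_div_succ (e.1 : ℕ) (Fin.pos c.1)
  have hlast := Nat.mul_div_le (e.2 : ℕ) B
  have hpred : B * ((p.1.2 : ℕ) - 1) + B = B * p.1.2 := by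
    have := p.2
    rw [← Nat.mul_succ, Nat.succ_eq_add_one, Nat.sub_add_cancel (by omega)]
  have := c.2.2
  rw [he.1] at hfirst
  rw [he.2] at hlast
  simp only [innerEdge, Fin.le_def]
  omega

lemma blockEdges_subset_cutEdges (hB : B ≠ 0) (p : FarBlocks n B) :
    blockEdges p ⊆ cutEdges (n + 1) (B * (p.1.1 + 1)) := fun e he => by
  have hpos : 0 < B := Nat.pos_of_ne_zero hB
  have hnested := innerEdge_nested p (⟨0, hpos⟩, ⟨0, hpos⟩) he
  have hlong := innerEdge_long (p, ((⟨0, hpos⟩, ⟨0, hpos⟩) : Fin B × Fin B))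
  simp only [innerEdge, Fin.le_def] at hnested hlong
  rw [mem_cutEdges]
  omega

/-- An upper bound both for the entropy of a single edge and, up to the factor `3`, for the error
made by replacing the entropy of `B ^ 2` edges by the logarithm of a number of tables. -/
noncomputable def edgeEntropyBound (M : Fin (n + 1) → ℤ) (B : ℕ) : ℝ :=
  Real.log (totalSupply M + B * B + 1) + 1

lemma entH_le_edgeEntropyBound {t : ℝ} (B : ℕ) (ht : 0 ≤ t) (htM : t ≤ totalSupply M) :
    entH t ≤ edgeEntropyBound M B := by
  refine (entH_le_log_add_one ht).trans (add_le_add_left (Real.log_le_log (by linarith) ?_) 1)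
  linarith [mul_self_nonneg (B : ℝ)]

lemma edgeEntropyBound_nonneg (M : Fin (n + 1) → ℤ) (B : ℕ) : 0 ≤ edgeEntropyBound M B :=
  entH_zero ▸ entH_le_edgeEntropyBound B le_rfl (Nat.cast_nonneg _)

lemma sum_entH_blockEdges_le (hB : B ≠ 0) (hf : f ∈ FlowPolytope n fun i => (M i : ℝ))
    (p : FarBlocks n B) :
    ∑ e ∈ blockEdges p, entH (f e.1 e.2) ≤
      Real.log ((B * B).multichoose ⌊∑ e ∈ blockEdges p, f e.1 e.2⌋₊) +
        3 * edgeEntropyBound M B := by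
  refine (sum_entH_le_log_multichoose (mul_ne_zero hB hB) (card_blockEdges_le hB p) fun e _ =>
    nonneg_of_mem_flowPolytope hf e.1 e.2).trans ?_
  have hmass : (⌊∑ e ∈ blockEdges p, f e.1 e.2⌋₊ : ℝ) ≤ totalSupply M := by
    exact_mod_cast Nat.floor_le_of_le
      (sum_le_totalSupply_of_subset_cutEdges hf (blockEdges_subset_cutEdges hB p))
  have hlog : Real.log ((B * B : ℕ) + (⌊∑ e ∈ blockEdges p, f e.1 e.2⌋₊ + 1)) ≤
      Real.log (totalSupply M + B * B + 1) :=
    Real.log_le_log (by positivity) (by push_cast; linarith)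
  unfold edgeEntropyBound
  linarith

lemma sum_entH_farBlocks_le (hB : B ≠ 0) (hf : f ∈ FlowPolytope n fun i => (M i : ℝ)) :
    ∑ p : FarBlocks n B, ∑ e ∈ blockEdges p, entH (f e.1 e.2) ≤
      Real.log (Kn n M) + 3 * ((n / B : ℕ) + 1) ^ 2 * edgeEntropyBound M B := by
  have hmulti : ∀ m, 0 < (B * B).multichoose m := fun m => by
    rw [Nat.multichoose_eq]
    have := Nat.mul_pos (Nat.pos_of_ne_zero hB) (Nat.pos_of_ne_zero hB)
    exact Nat.choose_pos (by omega)
  have hcard : (Fintype.card (FarBlocks n B) : ℝ) ≤ ((n / B : ℕ) + 1) ^ 2 := by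
    have := Fintype.card_subtype_le
      fun p : Fin (n / B + 1) × Fin (n / B + 1) => (p.1 : ℕ) + 4 ≤ p.2
    rw [Fintype.card_prod, Fintype.card_fin, ← sq] at this
    exact_mod_cast this
  have hcount : ∏ p : FarBlocks n B, (B * B).multichoose ⌊∑ e ∈ blockEdges p, f e.1 e.2⌋₊ ≤
      Kn n M := by
    simpa using prod_multichoose_le_Kn hf pairwiseDisjoint_blockEdges innerEdge_injective
      innerEdge_long fun p c e => innerEdge_nested p c
  have hbound := edgeEntropyBound_nonneg M B
  calc ∑ p : FarBlocks n B, ∑ e ∈ blockEdges p, entH (f e.1 e.2)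
      ≤ ∑ p : FarBlocks n B, (Real.log ((B * B).multichoose ⌊∑ e ∈ blockEdges p, f e.1 e.2⌋₊) +
          3 * edgeEntropyBound M B) := sum_le_sum fun p _ => sum_entH_blockEdges_le hB hf p
    _ = Real.log (∏ p : FarBlocks n B, (B * B).multichoose ⌊∑ e ∈ blockEdges p, f e.1 e.2⌋₊ : ℕ) +
          3 * Fintype.card (FarBlocks n B) * edgeEntropyBound M B := by
        rw [sum_add_distrib, Nat.cast_prod,
          Real.log_prod fun p _ => Nat.cast_ne_zero.2 (hmulti _).ne', sum_const, card_univ,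
          nsmul_eq_mul]
        ring
    _ ≤ Real.log (Kn n M) + 3 * ((n / B : ℕ) + 1) ^ 2 * edgeEntropyBound M B := by
        gcongr
        exact Nat.cast_pos.2 <| prod_pos fun p _ => hmulti _

/-- The edges joining two vertices of the same block or of blocks at distance at most three. -/
def nearEdges (n B : ℕ) : Finset (Fin (n + 1) × Fin (n + 1)) :=
  {e | e.1 < e.2 ∧ (e.2 : ℕ) / B < e.1 / B + 4}

lemma card_nearEdges_le (hB : B ≠ 0) : #(nearEdges n B) ≤ (n + 1) * (4 * B) := by
  have hspread : ∀ e ∈ nearEdges n B, e.1 < e.2 ∧ (e.2 : ℕ) < e.1 + 4 * B := fun e he => by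
    obtain ⟨hlt, hnear⟩ := (mem_filter_univ e).1 he
    refine ⟨hlt, ?_⟩
    rw [Nat.div_lt_iff_lt_mul (Nat.pos_of_ne_zero hB), add_mul] at hnear
    exact hnear.trans_le (Nat.add_le_add_right (Nat.div_mul_le_self _ B) _)
  calc #(nearEdges n B) ≤ #((univ : Finset (Fin (n + 1))) ×ˢ range (4 * B)) := by
        refine card_le_card_of_injOn (fun e => (e.1, (e.2 : ℕ) - e.1)) (fun e he => ?_) ?_
        · have := hspread e he
          exact mem_product.2 ⟨mem_univ _, mem_range.2 (by simp only; omega)⟩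
        · intro e he e' he' h
          have := hspread e he
          have := hspread e' he'
          simp only [Prod.ext_iff] at h
          exact Prod.ext h.1 (Fin.ext (by omega))
    _ = (n + 1) * (4 * B) := by rw [card_product, card_univ, Fintype.card_fin, card_range]

lemma sum_entH_le_farBlocks_add_nearEdges (hf : ∀ i j, 0 ≤ f i j) :
    (∑ i, ∑ j, if i < j then entH (f i j) else 0) ≤
      (∑ p : FarBlocks n B, ∑ e ∈ blockEdges p, entH (f e.1 e.2)) +
        ∑ e ∈ nearEdges n B, entH (f e.1 e.2) := by
  classical
  have hent : ∀ e : Fin (n + 1) × Fin (n + 1), 0 ≤ entH (f e.1 e.2) := fun e =>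
    entH_nonneg (hf e.1 e.2)
  have hcover : ({e | e.1 < e.2} : Finset (Fin (n + 1) × Fin (n + 1))) ⊆
      univ.biUnion (blockEdges : FarBlocks n B → _) ∪ nearEdges n B := fun e he => by
    have hlt := (mem_filter_univ e).1 he
    have hblock : ∀ i : Fin (n + 1), (i : ℕ) / B < n / B + 1 := fun i =>
      Nat.lt_succ_of_le (Nat.div_le_div_right (Nat.lt_succ_iff.1 i.2))
    by_cases hnear : (e.2 : ℕ) / B < e.1 / B + 4
    · exact mem_union_right _ ((mem_filter_univ e).2 ⟨hlt, hnear⟩)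
    · exact mem_union_left _ (mem_biUnion.2
        ⟨⟨(⟨_, hblock e.1⟩, ⟨_, hblock e.2⟩), not_lt.1 hnear⟩, mem_univ _,
          mem_blockEdges.2 ⟨rfl, rfl⟩⟩)
  calc (∑ i, ∑ j, if i < j then entH (f i j) else 0)
      = ∑ e : Fin (n + 1) × Fin (n + 1) with e.1 < e.2, entH (f e.1 e.2) := by
        rw [sum_filter, Fintype.sum_prod_type]
    _ ≤ ∑ e ∈ univ.biUnion (blockEdges : FarBlocks n B → _) ∪ nearEdges n B, entH (f e.1 e.2) :=
        sum_le_sum_of_subset_of_nonneg hcover fun e _ _ => hent e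
    _ ≤ ∑ e ∈ univ.biUnion (blockEdges : FarBlocks n B → _), entH (f e.1 e.2) +
          ∑ e ∈ nearEdges n B, entH (f e.1 e.2) := by
        rw [← sum_union_inter]
        exact le_add_of_nonneg_right (sum_nonneg fun e _ => hent e)
    _ = _ := by
        rw [sum_biUnion (pairwiseDisjoint_blockEdges.subset (Set.subset_univ _))]

/-- The bound for `flowEntropy - log Kn` obtained from blocks of `B` consecutive vertices, in units
of `edgeEntropyBound`: `3` for each pair of blocks and `1` for each near edge and each vertex. -/
def blockErrorCount (n B : ℕ) : ℕ := 3 * (n / B + 1) ^ 2 + (n + 1) * (4 * B + 1)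

theorem flowEntropy_le_log_Kn_add (hB : B ≠ 0) (hf : f ∈ FlowPolytope n fun i => (M i : ℝ)) :
    flowEntropy n (fun i => (M i : ℝ)) f ≤
      Real.log (Kn n M) + blockErrorCount n B * edgeEntropyBound M B := by
  have hbound := edgeEntropyBound_nonneg M B
  have hnear : ∑ e ∈ nearEdges n B, entH (f e.1 e.2) ≤
      (n + 1) * (4 * B) * edgeEntropyBound M B := by
    refine (sum_le_card_nsmul _ _ _ fun e _ => entH_le_edgeEntropyBound B
      (nonneg_of_mem_flowPolytope hf e.1 e.2) (le_totalSupply_of_mem_flowPolytope hf e.1 e.2)).trans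
      ?_
    rw [nsmul_eq_mul]
    gcongr
    exact_mod_cast card_nearEdges_le hB
  have hslack : (∑ j : Fin (n + 1), if 0 < (j : ℕ) ∧ (j : ℕ) < n then
      entH (∑ i : Fin (n + 1), if i < j then ((M i : ℝ) - f i j) else 0) else 0) ≤
        (n + 1) * edgeEntropyBound M B := by
    refine (sum_le_card_nsmul _ _ (edgeEntropyBound M B) fun j _ => ?_).trans_eq
      (by rw [card_univ, Fintype.card_fin, nsmul_eq_mul, Nat.cast_add_one])
    split_ifs
    exacts [entH_le_edgeEntropyBound B (slack_nonneg hf j) (slack_le_totalSupply hf j), hbound]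
  have hedges := sum_entH_le_farBlocks_add_nearEdges (B := B) (nonneg_of_mem_flowPolytope hf)
  have hfar := sum_entH_farBlocks_le hB hf
  unfold flowEntropy blockErrorCount
  push_cast
  linarith

end Blocks

section MaxFlowEntropy

variable {n : ℕ} {M : Fin (n + 1) → ℤ} {f : Fin (n + 1) → Fin (n + 1) → ℝ}

/-- The maximum flow entropy `sup_{f ∈ F_n(M)} H(f)`, with value `0` for an empty polytope. -/
noncomputable def maxFlowEntropy (n : ℕ) (M : Fin (n + 1) → ℤ) : ℝ :=
  sSup ((fun f => flowEntropy n (fun i => (M i : ℝ)) f) '' FlowPolytope n fun i => (M i : ℝ))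

lemma flowEntropy_nonneg (hf : f ∈ FlowPolytope n fun i => (M i : ℝ)) :
    0 ≤ flowEntropy n (fun i => (M i : ℝ)) f :=
  (sum_nonneg fun i _ => sum_nonneg fun j _ =>
    entH_nonneg (nonneg_of_mem_flowPolytope hf i j)).trans (sum_entH_le_flowEntropy hf)

lemma flowEntropy_le_maxFlowEntropy (hf : f ∈ FlowPolytope n fun i => (M i : ℝ)) :
    flowEntropy n (fun i => (M i : ℝ)) f ≤ maxFlowEntropy n M :=
  le_csSup ⟨_, Set.forall_mem_image.2 fun _ hg => flowEntropy_le_log_Kn_add one_ne_zero hg⟩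
    (Set.mem_image_of_mem _ hf)

theorem log_Kn_le_maxFlowEntropy (n : ℕ) (M : Fin (n + 1) → ℤ) :
    Real.log (Kn n M) ≤ maxFlowEntropy n M := by
  by_cases hK : Kn n M = 0
  · rw [hK, Nat.cast_zero, Real.log_zero]
    exact Real.sSup_nonneg (Set.forall_mem_image.2 fun f hf => flowEntropy_nonneg hf)
  · obtain ⟨f, hf, hle⟩ := exists_log_Kn_le_flowEntropy hK
    exact hle.trans (flowEntropy_le_maxFlowEntropy hf)

theorem maxFlowEntropy_le_log_Kn_add (M : Fin (n + 1) → ℤ) {B : ℕ} (hB : B ≠ 0) :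
    maxFlowEntropy n M ≤ Real.log (Kn n M) + blockErrorCount n B * edgeEntropyBound M B :=
  Real.sSup_le (Set.forall_mem_image.2 fun _ hf => flowEntropy_le_log_Kn_add hB hf)
    (add_nonneg (Real.log_natCast_nonneg _)
      (mul_nonneg (Nat.cast_nonneg _) (edgeEntropyBound_nonneg M B)))

end MaxFlowEntropy

section Band

variable {n : ℕ}

/-- The edges of length between `2` and `d + 1` that start at `(d + 1) ^ 2` or later: no cut `k` is
crossed by more than `k` of them. -/
def bandEdges (n d : ℕ) : Finset (Fin (n + 1) × Fin (n + 1)) :=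
  {e | (d + 1) ^ 2 ≤ (e.1 : ℕ) ∧ (e.1 : ℕ) + 2 ≤ e.2 ∧ (e.2 : ℕ) ≤ e.1 + d + 1}

lemma mem_bandEdges {d : ℕ} {e : Fin (n + 1) × Fin (n + 1)} :
    e ∈ bandEdges n d ↔
      (d + 1) ^ 2 ≤ (e.1 : ℕ) ∧ (e.1 : ℕ) + 2 ≤ e.2 ∧ (e.2 : ℕ) ≤ e.1 + d + 1 := by
  simp [bandEdges]

lemma mul_le_card_bandEdges {d u : ℕ} (h : (d + 1) ^ 2 + u + d ≤ n) :
    u * d ≤ #(bandEdges n d) := by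
  let edge (σ : Fin u × Fin d) : Fin (n + 1) × Fin (n + 1) :=
    (⟨(d + 1) ^ 2 + σ.1, by omega⟩, ⟨(d + 1) ^ 2 + σ.1 + 2 + σ.2, by omega⟩)
  have hinj : Function.Injective edge := fun σ τ hστ => by
    simp only [edge, Prod.ext_iff, Fin.ext_iff] at hστ
    exact Prod.ext (Fin.ext (by omega)) (Fin.ext (by omega))
  calc u * d = #(univ : Finset (Fin u × Fin d)) := by simp
    _ ≤ #(bandEdges n d) := card_le_card_of_injOn edge
        (fun σ _ => mem_bandEdges.2 ⟨Nat.le_add_right _ _, by simp only [edge]; omega,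
          by simp only [edge]; omega⟩) hinj.injOn

lemma card_bandEdges_inter_cutEdges_le (n d k : ℕ) :
    #(bandEdges n d ∩ cutEdges (n + 1) k) ≤ k := by
  have hmem : ∀ e ∈ bandEdges n d ∩ cutEdges (n + 1) k, (d + 1) ^ 2 ≤ (e.1 : ℕ) ∧
      (e.2 : ℕ) ≤ e.1 + d + 1 ∧ (e.1 : ℕ) ≤ k ∧ k < e.2 := fun e he => by
    rw [mem_inter, mem_bandEdges, mem_cutEdges] at he
    tauto
  rcases (bandEdges n d ∩ cutEdges (n + 1) k).eq_empty_or_nonempty with hempty | ⟨e₀, he₀⟩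
  · simp [hempty]
  calc #(bandEdges n d ∩ cutEdges (n + 1) k)
      ≤ #(range (d + 1) ×ˢ range (d + 1)) := by
        refine card_le_card_of_injOn (fun e => (k - e.1, e.2 - (k + 1))) (fun e he => ?_)
          fun e he e' he' h => ?_
        · have := hmem e he
          exact mem_product.2 ⟨mem_range.2 (by dsimp only; omega),
            mem_range.2 (by dsimp only; omega)⟩
        · have := hmem e he
          have := hmem e' he'
          simp only [Prod.ext_iff] at h
          exact Prod.ext (Fin.ext (by omega)) (Fin.ext (by omega))
    _ = (d + 1) ^ 2 := by rw [card_product, card_range, sq]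
    _ ≤ k := (hmem e₀ he₀).1.trans (hmem e₀ he₀).2.2.1

variable {M : Fin (n + 1) → ℤ}

lemma isPartialFlow_bandEdges (hM : ∀ k < n, (k : ℤ) ≤ sPartial n M k) (d : ℕ) :
    IsPartialFlow M fun i j => if (i, j) ∈ bandEdges n d then 1 else 0 where
  eq_zero i j hij := if_neg fun h => by
    have := mem_bandEdges.1 h
    dsimp only at this
    omega
  cutFlow_le k hk := by
    refine le_trans ?_ (hM k hk)
    rw [cutFlow, sum_ite_mem, sum_const, smul_eq_mul, mul_one, inter_comm]
    exact_mod_cast card_bandEdges_inter_cutEdges_le n d k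

lemma one_le_entH_one : 1 ≤ entH 1 := by
  have := Real.log_two_gt_d9
  norm_num [entH]
  linarith

lemma card_bandEdges_le_maxFlowEntropy (hzero : ∑ i, M i = 0)
    (hM : ∀ k < n, (k : ℤ) ≤ sPartial n M k) (d : ℕ) :
    #(bandEdges n d) ≤ maxFlowEntropy n M := by
  set x := completion M fun i j => if (i, j) ∈ bandEdges n d then 1 else 0
  have hmem := natCast_mem_flowPolytope (isIntFlow_completion hzero (isPartialFlow_bandEdges hM d))
  have hband : ∀ e ∈ bandEdges n d, x e.1 e.2 = 1 := fun e he => by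
    have := mem_bandEdges.1 he
    exact (if_neg (by omega)).trans (if_pos he)
  calc (#(bandEdges n d) : ℝ) = ∑ e ∈ bandEdges n d, 1 := by simp
    _ ≤ ∑ e ∈ bandEdges n d, entH (x e.1 e.2) := sum_le_sum fun e he => by
        rw [hband e he, Nat.cast_one]
        exact one_le_entH_one
    _ ≤ ∑ e : Fin (n + 1) × Fin (n + 1), entH (x e.1 e.2) :=
        sum_le_sum_of_subset_of_nonneg (subset_univ _) fun e _ _ => entH_nonneg (Nat.cast_nonneg _)
    _ = ∑ i, ∑ j, entH (x i j) := Fintype.sum_prod_type _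
    _ ≤ flowEntropy n (fun i => (M i : ℝ)) fun i j => (x i j : ℝ) := sum_entH_le_flowEntropy hmem
    _ ≤ maxFlowEntropy n M := flowEntropy_le_maxFlowEntropy hmem

theorem mul_sqrt_le_maxFlowEntropy (hn : 64 ≤ n) (hzero : ∑ i, M i = 0)
    (hM : ∀ k < n, (k : ℤ) ≤ sPartial n M k) : n * √n / 16 ≤ maxFlowEntropy n M := by
  set s := Nat.sqrt n
  have hs8 : 8 ≤ s := Nat.le_sqrt.2 hn
  have hwidth : (s / 2 - 1 + 1) ^ 2 + n / 2 + (s / 2 - 1) ≤ n := by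
    have hs : s * s ≤ n := Nat.sqrt_le n
    have h8s : 8 * s ≤ s * s := Nat.mul_le_mul_right s hs8
    have hquarter : 4 * (s / 2) ^ 2 ≤ s * s := by
      linarith [Nat.mul_le_mul (Nat.mul_div_le s 2) (Nat.mul_div_le s 2)]
    rw [Nat.sub_add_cancel (by omega)]
    generalize (s / 2) ^ 2 = q at hquarter ⊢
    omega
  have hsqrt8 : 8 ≤ √(n : ℝ) := Real.le_sqrt_of_sq_le (by exact_mod_cast hn)
  have hsqrt : √(n : ℝ) ≤ s + 1 := Real.sqrt_le_iff.2 ⟨by positivity, by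
    exact_mod_cast (Nat.sqrt_lt'.1 s.lt_succ_self).le⟩
  have hhalf : (n : ℝ) / 4 ≤ (n / 2 : ℕ) := by
    have : n ≤ 4 * (n / 2) := by omega
    rw [div_le_iff₀' four_pos]
    exact_mod_cast this
  have hdepth : √(n : ℝ) / 4 ≤ (s / 2 - 1 : ℕ) := by
    have : s ≤ 2 * (s / 2 - 1) + 3 := by omega
    have : (s : ℝ) ≤ 2 * (s / 2 - 1 : ℕ) + 3 := by exact_mod_cast this
    linarith
  calc (n : ℝ) * √n / 16 = n / 4 * (√n / 4) := by ring
    _ ≤ (n / 2 : ℕ) * (s / 2 - 1 : ℕ) := by gcongr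
    _ ≤ #(bandEdges n (s / 2 - 1)) := by exact_mod_cast mul_le_card_bandEdges hwidth
    _ ≤ maxFlowEntropy n M := card_bandEdges_le_maxFlowEntropy hzero hM _

end Band

section Asymptotics

open Filter Asymptotics Topology

lemma log_natCast_add_le (t : ℕ) {b : ℝ} (hb : 0 ≤ b) :
    Real.log (t + b + 1) ≤ Real.log t + Real.log (b + 2) := by
  rcases t.eq_zero_or_pos with rfl | ht
  · rw [Nat.cast_zero, Real.log_zero, zero_add, zero_add]
    exact Real.log_le_log (by positivity) (by linarith)
  · have ht1 : (1 : ℝ) ≤ t := by exact_mod_cast ht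
    rw [← Real.log_mul (by positivity) (by positivity)]
    exact Real.log_le_log (by positivity) (by nlinarith)

lemma isLittleO_log_natCast_rpow {r : ℝ} (hr : 0 < r) :
    (fun n : ℕ => Real.log n) =o[atTop] fun n : ℕ => (n : ℝ) ^ r :=
  (isLittleO_log_rpow_atTop hr).comp_tendsto tendsto_natCast_atTop_atTop

lemma isLittleO_const_natCast_rpow {r : ℝ} (hr : 0 < r) (c : ℝ) :
    (fun _ : ℕ => c) =o[atTop] fun n : ℕ => (n : ℝ) ^ r :=
  isLittleO_const_left.2 <| Or.inr <| tendsto_norm_atTop_atTop.comp <|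
    (tendsto_rpow_atTop hr).comp tendsto_natCast_atTop_atTop

variable {M : (n : ℕ) → Fin (n + 1) → ℤ}

lemma isLittleO_edgeEntropyBound {B : ℕ → ℕ} (hB : ∀ᶠ n in atTop, B n ≤ n) {r : ℝ} (hr : 0 < r)
    (hlog : (fun n => Real.log (totalSupply (M n))) =o[atTop] fun n : ℕ => (n : ℝ) ^ r) :
    (fun n => edgeEntropyBound (M n) (B n)) =o[atTop] fun n : ℕ => (n : ℝ) ^ r := by
  refine IsBigO.trans_isLittleO (IsBigO.of_norm_eventuallyLE ?_)
    ((hlog.add ((isLittleO_log_natCast_rpow hr).const_mul_left 2)).add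
      (isLittleO_const_natCast_rpow hr (Real.log 3 + 1)))
  filter_upwards [hB, eventually_ge_atTop 1] with n hBn hn
  have hn1 : (1 : ℝ) ≤ n := by exact_mod_cast hn
  have hsq : (B n * B n : ℝ) ≤ n * n := by gcongr
  rw [Real.norm_of_nonneg (edgeEntropyBound_nonneg _ _)]
  calc edgeEntropyBound (M n) (B n)
      ≤ Real.log (totalSupply (M n)) + Real.log (B n * B n + 2) + 1 := by
        unfold edgeEntropyBound
        gcongr
        exact log_natCast_add_le _ (by positivity)
    _ ≤ Real.log (totalSupply (M n)) + Real.log (3 * n ^ 2) + 1 := by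
        gcongr
        nlinarith
    _ = Real.log (totalSupply (M n)) + 2 * Real.log n + (Real.log 3 + 1) := by
        rw [Real.log_mul three_ne_zero (by positivity), Real.log_pow]
        push_cast
        ring

/-- The number of consecutive vertices in a block. The exponent `1 / 3` balances the two terms
`(n / B) ^ 2` and `n * B` of `blockErrorCount n B`. -/
noncomputable def blockSize (n : ℕ) : ℕ := ⌈(n : ℝ) ^ (1 / 3 : ℝ)⌉₊

lemma blockSize_le_self {n : ℕ} (hn : 1 ≤ n) : blockSize n ≤ n :=
  Nat.ceil_le.2 <| Real.rpow_le_self_of_one_le (by exact_mod_cast hn) (by norm_num)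

lemma blockErrorCount_blockSize_le {n : ℕ} (hn : 1 ≤ n) :
    blockErrorCount n (blockSize n) ≤ 30 * (n : ℝ) ^ (4 / 3 : ℝ) := by
  set x := (n : ℝ) ^ (1 / 3 : ℝ) with hx
  have hx1 : 1 ≤ x := Real.one_le_rpow (by exact_mod_cast hn) (by norm_num)
  have hx3 : x ^ 3 = n := by rw [hx, ← Real.rpow_mul_natCast n.cast_nonneg]; norm_num
  have hx4 : (n : ℝ) ^ (4 / 3 : ℝ) = x ^ 4 := by
    rw [hx, ← Real.rpow_mul_natCast n.cast_nonneg]; norm_num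
  have hlower : x ≤ blockSize n := Nat.le_ceil _
  have hceil : (blockSize n : ℝ) < x + 1 := Nat.ceil_lt_add_one (by positivity)
  have hupper : (blockSize n : ℝ) ≤ 2 * x := by linarith
  have hblocks : ((n / blockSize n : ℕ) : ℝ) ≤ x ^ 2 := by
    refine Nat.cast_div_le.trans ((div_le_iff₀ (by linarith)).2 ?_)
    calc (n : ℝ) = x ^ 2 * x := by rw [← hx3]; ring
      _ ≤ x ^ 2 * blockSize n := by gcongr
  calc (blockErrorCount n (blockSize n) : ℝ)
      = 3 * ((n / blockSize n : ℕ) + 1 : ℝ) ^ 2 + (x ^ 3 + 1) * (4 * blockSize n + 1) := by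
        rw [hx3, blockErrorCount]
        push_cast
        rfl
    _ ≤ 3 * (x ^ 2 + x ^ 2) ^ 2 + (x ^ 3 + x ^ 3) * (4 * (2 * x) + x) := by
        gcongr
        · exact one_le_pow₀ hx1
        · exact one_le_pow₀ hx1
    _ = 30 * (n : ℝ) ^ (4 / 3 : ℝ) := by rw [hx4]; ring

lemma isBigO_blockErrorCount :
    (fun n => (blockErrorCount n (blockSize n) : ℝ)) =O[atTop] fun n : ℕ => (n : ℝ) ^ (4 / 3 : ℝ) :=
  .of_bound 30 <| (eventually_ge_atTop 1).mono fun n hn => by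
    rw [Real.norm_of_nonneg (Nat.cast_nonneg _), Real.norm_of_nonneg (by positivity)]
    exact blockErrorCount_blockSize_le hn

lemma isBigO_maxFlowEntropy (hzero : ∀ n, ∑ i, M n i = 0)
    (hpartial : ∀ n : ℕ, ∀ k < n, (k : ℤ) ≤ sPartial n (M n) k) :
    (fun n : ℕ => (n : ℝ) ^ (3 / 2 : ℝ)) =O[atTop] fun n => maxFlowEntropy n (M n) :=
  .of_bound 16 <| (eventually_ge_atTop 64).mono fun n hn => by
    have hpow : (n : ℝ) ^ (3 / 2 : ℝ) = n * √n := by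
      rw [Real.sqrt_eq_rpow, ← Real.rpow_one_add' n.cast_nonneg (by norm_num)]
      norm_num
    rw [hpow, Real.norm_of_nonneg (by positivity)]
    linarith [mul_sqrt_le_maxFlowEntropy hn (hzero n) (hpartial n),
      Real.le_norm_self (maxFlowEntropy n (M n))]

theorem kostant_log_div_sup_entropy_tendsto_one_general (hzero : ∀ n, ∑ i, M n i = 0)
    (hpartial : ∀ n : ℕ, ∀ k < n, (k : ℤ) ≤ sPartial n (M n) k)
    (hlog : (fun n => Real.log (totalSupply (M n))) =o[atTop]
      fun n : ℕ => (n : ℝ) ^ (1 / 6 : ℝ)) :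
    Tendsto (fun n => Real.log (Kn n (M n)) / maxFlowEntropy n (M n)) atTop (𝓝 1) := by
  let error (n : ℕ) : ℝ :=
    blockErrorCount n (blockSize n) * edgeEntropyBound (M n) (blockSize n)
  have herror : error =o[atTop] fun n => maxFlowEntropy n (M n) := by
    have hedge := isLittleO_edgeEntropyBound
      ((eventually_ge_atTop 1).mono fun _ => blockSize_le_self) (by norm_num) hlog
    refine ((isBigO_blockErrorCount.mul_isLittleO hedge).congr_right fun n => ?_).trans_isBigO
      (isBigO_maxFlowEntropy hzero hpartial)
    rw [← Real.rpow_add_of_nonneg n.cast_nonneg (by norm_num) (by norm_num)]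
    norm_num
  have hpos : ∀ᶠ n in atTop, 0 < maxFlowEntropy n (M n) :=
    (eventually_ge_atTop 64).mono fun n hn =>
      lt_of_lt_of_le (by positivity) (mul_sqrt_le_maxFlowEntropy hn (hzero n) (hpartial n))
  refine tendsto_of_tendsto_of_tendsto_of_le_of_le'
    (by simpa using herror.tendsto_div_nhds_zero.const_sub 1) tendsto_const_nhds ?_ ?_
  · filter_upwards [hpos, eventually_ge_atTop 1] with n hS hn
    have hB : blockSize n ≠ 0 := (Nat.ceil_pos.2 (by positivity)).ne'
    rw [one_sub_div hS.ne']
    gcongr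
    exact sub_le_iff_le_add.2 (maxFlowEntropy_le_log_Kn_add (M n) hB)
  · filter_upwards [hpos] with n hS
    exact div_le_one_of_le₀ (log_Kn_le_maxFlowEntropy n (M n)) hS.le

lemma isLittleO_log_of_le_rpow {t : ℕ → ℕ} {a q r : ℝ} (ha : 0 < a) (hr : 0 < r)
    (ht : ∀ n, t n ≤ a * (n : ℝ) ^ q) :
    (fun n => Real.log (t n)) =o[atTop] fun n : ℕ => (n : ℝ) ^ r := by
  refine IsBigO.trans_isLittleO (IsBigO.of_norm_eventuallyLE ?_)
    ((isLittleO_const_natCast_rpow hr |Real.log a|).add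
      ((isLittleO_log_natCast_rpow hr).const_mul_left |q|))
  filter_upwards [eventually_ge_atTop 1] with n hn
  have hn0 : (0 : ℝ) < n := by exact_mod_cast hn
  rw [Real.norm_of_nonneg (Real.log_natCast_nonneg _)]
  rcases (t n).eq_zero_or_pos with h0 | h0
  · rw [h0, Nat.cast_zero, Real.log_zero]
    positivity
  calc Real.log (t n) ≤ Real.log (a * (n : ℝ) ^ q) :=
        Real.log_le_log (by exact_mod_cast h0) (ht n)
    _ = Real.log a + q * Real.log n := by
        rw [Real.log_mul ha.ne' (by positivity), Real.log_rpow hn0]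
    _ ≤ |Real.log a| + |q| * Real.log n := by gcongr <;> exact le_abs_self _

end Asymptotics

section Extend

variable {n : ℕ}

lemma sum_extend (N : Fin n → ℤ) : ∑ i, extend n N i = 0 := by
  simp [extend, Fin.sum_univ_castSucc]

lemma le_sPartial_extend {N : Fin n → ℤ} (hN : ∀ i, 0 < N i) {k : ℕ} (hk : k < n) :
    (k : ℤ) ≤ sPartial n (extend n N) k := by
  have hsum : sPartial n (extend n N) k = ∑ i ∈ Iic ⟨k, hk⟩, N i := by
    have hIic : Iic ⟨k, hk⟩ = ({i | (i : ℕ) ≤ k} : Finset (Fin n)) := by ext; simp [Fin.le_def]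
    simp [sPartial, extend, Fin.sum_univ_castSucc, hk.not_ge, hIic, sum_filter]
  calc (k : ℤ) ≤ #(Iic (⟨k, hk⟩ : Fin n)) := by simp
    _ = ∑ _i ∈ Iic (⟨k, hk⟩ : Fin n), (1 : ℤ) := by simp
    _ ≤ sPartial n (extend n N) k := hsum ▸ sum_le_sum fun i _ => hN i

lemma totalSupply_extend (N : Fin n → ℕ) :
    totalSupply (extend n fun i => (N i : ℤ)) = ∑ i, N i := by
  have hlast : -∑ i, (N i : ℤ) ≤ 0 := neg_nonpos.2 (sum_nonneg fun i _ => Int.natCast_nonneg _)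
  simp [totalSupply, extend, Fin.sum_univ_castSucc, Int.toNat_of_nonpos hlast]

lemma totalSupply_extend_le {N : ℕ → ℕ} {a p : ℝ} (ha : 0 < a) (hp : 0 < p)
    (hgrowth : ∀ k : ℕ, (N k : ℝ) ≤ a * ((k : ℝ) + 1) ^ p) (n : ℕ) :
    totalSupply (extend n fun k : Fin n => (N k : ℤ)) ≤ a * (n : ℝ) ^ (p + 1) := by
  rw [totalSupply_extend fun k : Fin n => N k, Nat.cast_sum]
  calc ∑ k : Fin n, (N k : ℝ) ≤ ∑ _k : Fin n, a * (n : ℝ) ^ p := sum_le_sum fun k _ => by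
        refine (hgrowth k).trans ?_
        gcongr
        exact_mod_cast k.is_lt
    _ = a * (n : ℝ) ^ (p + 1) := by
        rw [sum_const, card_univ, Fintype.card_fin, nsmul_eq_mul,
          Real.rpow_add_one' n.cast_nonneg (by positivity)]
        ring

end Extend

/-- **Theorem (asymptotics via maximum flow entropy).** For a sequence of
positive integers `N_0, N_1, …` of at most polynomial growth, the maximum flow
entropy asymptotically approximates `log K_n(N)`:
`log K_n(N^{(n)}) / sup_{f ∈ F_n(N^{(n)})} H(f) → 1` as `n → ∞`. -/
theorem kostant_log_div_sup_entropy_tendsto_one (N : ℕ → ℕ) (hpos : ∀ k, 0 < N k)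
    (a p : ℝ) (ha : 0 < a) (hp : 0 < p)
    (hgrowth : ∀ k : ℕ, (N k : ℝ) ≤ a * ((k : ℝ) + 1) ^ p) :
    Filter.Tendsto
      (fun n : ℕ =>
        Real.log (Kn n (extend n fun k : Fin n => (N k : ℤ))) /
          sSup ((fun f =>
              flowEntropy n (fun i => ((extend n fun k : Fin n => (N k : ℤ)) i : ℝ)) f) ''
            FlowPolytope n fun i => ((extend n fun k : Fin n => (N k : ℤ)) i : ℝ)))
      Filter.atTop (nhds 1) :=
  kostant_log_div_sup_entropy_tendsto_one_general (fun _ => sum_extend _)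
    (fun _ _ => le_sPartial_extend fun i => Int.natCast_pos.2 (hpos i))
    (isLittleO_log_of_le_rpow ha (by norm_num) (totalSupply_extend_le ha hp hgrowth))
end

section
/- For every real number t > 0 the following inequalities hold: e·(t + 1/2) ≥ (t+1)^{t+1}/t^{t}; (t+1)^{t+1}/t^{t} ≥ e·(t + 1/2 − 1/(24t)); (t+1)^{t+1}/t^{t} ≥ (e/t)^{t}; and (t+1)^{t+1}/t^{t} ≥ e·t + 1. -/
/-!
Write `F t = (t + 1) log (t + 1) - t log t`, so that the quantity to be bounded is `exp (F t)`.

Since `F t = 1 + ∫ x in t..t+1, log x`, the first two bounds estimate the error of the midpoint rule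
for the logarithm. Folding the integral at the midpoint `m = t + 1/2` turns the integrand into
`log (m² - x²)` on `[0, 1/2]`, which lies between `2 log m - x² / (m² - 1/4)` and `2 log m`, where
`m² - 1/4 = t (t + 1)`.

For the last bound, `exp ∘ F` is concave on `[0, ∞)`: its second derivative has the sign of
`(log (t + 1) - log t)² - 1 / (t (t + 1))`, which is nonpositive because the logarithmic mean of `t`
and `t + 1` is at least their geometric mean. The function equals `1` at `0` and, by the second
bound, is eventually at least `e t`; a concave function that eventually lies above a line grows at
least as fast as that line from the start.
-/

section

open Real Set Filter Topology intervalIntegral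

-- For `b ≤ a` and `u = √(a / b)`, this is the square of `log u ≤ sinh (log u) = (u - u⁻¹) / 2`.
theorem sq_log_sub_log_le {a b : ℝ} (ha : 0 < a) (hb : 0 < b) :
    (log a - log b) ^ 2 ≤ (a - b) ^ 2 / (a * b) := by
  wlog hba : b ≤ a generalizing a b
  · simpa only [sub_sq_comm, mul_comm] using this hb ha (le_of_not_ge hba)
  have hab : 0 < a / b := div_pos ha hb
  have hr : 0 < √(a / b) := sqrt_pos.2 hab
  have hlog : log √(a / b) = (log a - log b) / 2 := by
    rw [log_sqrt hab.le, log_div ha.ne' hb.ne']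
  have hlog_nonneg : 0 ≤ log √(a / b) :=
    log_nonneg (one_le_sqrt.2 ((one_le_div hb).2 hba))
  have hsinh : sinh (log √(a / b)) ^ 2 = (a - b) ^ 2 / (a * b) / 4 := by
    rw [sinh_log hr, div_pow, sub_sq, mul_assoc, mul_inv_cancel₀ hr.ne', inv_pow, sq_sqrt hab.le]
    field_simp
    ring
  have hle := pow_le_pow_left₀ hlog_nonneg (self_le_sinh_iff.2 hlog_nonneg) 2
  rw [hsinh, hlog] at hle
  linarith

theorem add_mul_sub_le_of_concaveOn_Ici {f : ℝ → ℝ} {a b c t : ℝ} (hf : ConcaveOn ℝ (Ici b) f)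
    (hline : ∀ᶠ s in atTop, a * s + c ≤ f s) (ht : b ≤ t) :
    f b + a * (t - b) ≤ f t := by
  rcases ht.eq_or_lt with rfl | hbt
  · simp only [sub_self, mul_zero, add_zero, le_refl]
  have hlim : Tendsto (fun s ↦ a + (a * b + c - f b) / (s - b)) atTop (𝓝 a) := by
    simpa only [add_zero, id_eq, ← sub_eq_add_neg] using tendsto_const_nhds.add
      ((tendsto_atTop_add_const_right atTop (-b) tendsto_id).const_div_atTop (a * b + c - f b))
  have hslope : ∀ᶠ s in atTop, a + (a * b + c - f b) / (s - b) ≤ (f t - f b) / (t - b) := by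
    filter_upwards [hline, eventually_gt_atTop t] with s hs hts
    have hbs : 0 < s - b := sub_pos.2 (hbt.trans hts)
    calc a + (a * b + c - f b) / (s - b) = (a * s + c - f b) / (s - b) := by field_simp; ring
      _ ≤ (f s - f b) / (s - b) := by gcongr
      _ ≤ (f t - f b) / (t - b) := by
        simpa only [slope_def_field] using hf.slope_anti self_mem_Ici ⟨hbt.le, hbt.ne'⟩
          ⟨(hbt.trans hts).le, (hbt.trans hts).ne'⟩ hts.le
  have hgrowth := (le_div_iff₀ (sub_pos.2 hbt)).1 (le_of_tendsto hlim hslope)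
  linarith

theorem concaveOn_exp_comp_of_hasDerivWithinAt2 {D : Set ℝ} (hD : Convex ℝ D) {f f' f'' : ℝ → ℝ}
    (hf : ContinuousOn f D) (hf' : ∀ x ∈ interior D, HasDerivWithinAt f (f' x) (interior D) x)
    (hf'' : ∀ x ∈ interior D, HasDerivWithinAt f' (f'' x) (interior D) x)
    (hle : ∀ x ∈ interior D, f' x ^ 2 + f'' x ≤ 0) :
    ConcaveOn ℝ D fun x ↦ exp (f x) := by
  refine concaveOn_of_hasDerivWithinAt2_nonpos hD hf.rexp (fun x hx ↦ (hf' x hx).exp)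
    (fun x hx ↦ (hf' x hx).exp.mul (hf'' x hx)) fun x hx ↦ ?_
  calc exp (f x) * f' x * f' x + exp (f x) * f'' x = exp (f x) * (f' x ^ 2 + f'' x) := by ring
    _ ≤ 0 := mul_nonpos_of_nonneg_of_nonpos (exp_pos _).le (hle x hx)

section MidpointRule

variable {m h x : ℝ}

theorem log_sq_sub_sq_le (hx : |x| < m) : log (m ^ 2 - x ^ 2) ≤ 2 * log m := by
  have hpos : 0 < m ^ 2 - x ^ 2 := sub_pos.2 (sq_lt_sq' (abs_lt.1 hx).1 (abs_lt.1 hx).2)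
  calc log (m ^ 2 - x ^ 2) ≤ log (m ^ 2) := log_le_log hpos (sub_le_self _ (sq_nonneg x))
    _ = 2 * log m := by rw [log_pow, Nat.cast_ofNat]

theorem le_log_sq_sub_sq (hx : |x| < m) :
    2 * log m - x ^ 2 / (m ^ 2 - x ^ 2) ≤ log (m ^ 2 - x ^ 2) := by
  have hm : 0 < m := (abs_nonneg x).trans_lt hx
  have hpos : 0 < m ^ 2 - x ^ 2 := sub_pos.2 (sq_lt_sq' (abs_lt.1 hx).1 (abs_lt.1 hx).2)
  have hratio := one_sub_inv_le_log_of_pos (div_pos hpos (pow_pos hm 2))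
  rw [log_div hpos.ne' (pow_pos hm 2).ne', log_pow, Nat.cast_ofNat] at hratio
  have hinv : 1 - ((m ^ 2 - x ^ 2) / m ^ 2)⁻¹ = -(x ^ 2 / (m ^ 2 - x ^ 2)) := by
    field_simp
    ring
  linarith

theorem integral_log_eq_integral_log_sq_sub_sq (hh : 0 ≤ h) (hm : h < m) :
    ∫ x in (m - h)..(m + h), log x = ∫ x in 0..h, log (m ^ 2 - x ^ 2) := by
  have hfold : ∀ x ∈ uIcc 0 h, log (m ^ 2 - x ^ 2) = log (m - x) + log (m + x) := by
    intro x hx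
    rw [uIcc_of_le hh] at hx
    rw [← log_mul (by linarith [hx.2]) (by linarith [hx.1]), mul_comm, ← sq_sub_sq]
  have hleft : IntervalIntegrable (fun x ↦ log (m - x)) MeasureTheory.volume 0 h := by
    simpa using (intervalIntegrable_log' (a := m) (b := m - h)).comp_sub_left m
  have hright : IntervalIntegrable (fun x ↦ log (m + x)) MeasureTheory.volume 0 h := by
    simpa using (intervalIntegrable_log' (a := m) (b := m + h)).comp_add_left m
  rw [integral_congr hfold, integral_add hleft hright, integral_comp_sub_left,
    integral_comp_add_left, sub_zero, add_zero,
    integral_add_adjacent_intervals intervalIntegrable_log' intervalIntegrable_log']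

theorem intervalIntegrable_log_sq_sub_sq (hh : 0 ≤ h) (hm : h < m) :
    IntervalIntegrable (fun x ↦ log (m ^ 2 - x ^ 2)) MeasureTheory.volume 0 h := by
  refine (ContinuousOn.log (by fun_prop) fun x hx ↦ ?_).intervalIntegrable
  rw [uIcc_of_le hh] at hx
  exact (sub_pos.2 (pow_lt_pow_left₀ (hx.2.trans_lt hm) hx.1 two_ne_zero)).ne'

theorem integral_log_le_midpoint (hh : 0 ≤ h) (hm : h < m) :
    ∫ x in (m - h)..(m + h), log x ≤ 2 * h * log m := by
  calc ∫ x in (m - h)..(m + h), log x = ∫ x in 0..h, log (m ^ 2 - x ^ 2) :=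
        integral_log_eq_integral_log_sq_sub_sq hh hm
    _ ≤ ∫ _ in 0..h, 2 * log m :=
        integral_mono_on hh (intervalIntegrable_log_sq_sub_sq hh hm) intervalIntegrable_const
          fun x hx ↦ log_sq_sub_sq_le (by rw [abs_of_nonneg hx.1]; exact hx.2.trans_lt hm)
    _ = 2 * h * log m := by rw [integral_const, smul_eq_mul]; ring

theorem midpoint_sub_le_integral_log (hh : 0 ≤ h) (hm : h < m) :
    2 * h * log m - h ^ 3 / (3 * (m ^ 2 - h ^ 2)) ≤ ∫ x in (m - h)..(m + h), log x := by
  have hpos : 0 < m ^ 2 - h ^ 2 := sub_pos.2 (pow_lt_pow_left₀ hm hh two_ne_zero)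
  have hbound : ∀ x ∈ Icc 0 h, 2 * log m - x ^ 2 / (m ^ 2 - h ^ 2) ≤ log (m ^ 2 - x ^ 2) := by
    intro x hx
    have hsq : x ^ 2 ≤ h ^ 2 := pow_le_pow_left₀ hx.1 hx.2 2
    calc 2 * log m - x ^ 2 / (m ^ 2 - h ^ 2) ≤ 2 * log m - x ^ 2 / (m ^ 2 - x ^ 2) := by gcongr
      _ ≤ log (m ^ 2 - x ^ 2) :=
        le_log_sq_sub_sq (by rw [abs_of_nonneg hx.1]; exact hx.2.trans_lt hm)
  calc 2 * h * log m - h ^ 3 / (3 * (m ^ 2 - h ^ 2))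
      = ∫ x in 0..h, (2 * log m - x ^ 2 / (m ^ 2 - h ^ 2)) := by
        rw [integral_sub intervalIntegrable_const
          (Continuous.intervalIntegrable (by fun_prop) 0 h), integral_const, integral_div,
          integral_pow, smul_eq_mul]
        field_simp
        ring
    _ ≤ ∫ x in 0..h, log (m ^ 2 - x ^ 2) :=
        integral_mono_on hh (Continuous.intervalIntegrable (by fun_prop) 0 h)
          (intervalIntegrable_log_sq_sub_sq hh hm) hbound
    _ = ∫ x in (m - h)..(m + h), log x := (integral_log_eq_integral_log_sq_sub_sq hh hm).symm

end MidpointRule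

/-- The Shannon entropy, in nats, of the geometric distribution on `ℕ` with mean `t`. The junk value
`log 0 = 0` gives the correct entropy `0` at `t = 0`. -/
noncomputable def geometricEntropy (t : ℝ) : ℝ :=
  (t + 1) * log (t + 1) - t * log t

variable {t : ℝ}

theorem exp_geometricEntropy (ht : 0 < t) :
    exp (geometricEntropy t) = (t + 1) ^ (t + 1) / t ^ t := by
  rw [geometricEntropy, exp_sub, rpow_def_of_pos (add_pos ht one_pos), rpow_def_of_pos ht,
    mul_comm (log (t + 1)), mul_comm (log t)]

theorem geometricEntropy_eq_one_add_integral_log (t : ℝ) :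
    geometricEntropy t = 1 + ∫ x in t..(t + 1), log x := by
  rw [geometricEntropy, integral_log]
  ring

theorem geometricEntropy_le_one_add_log (ht : 0 < t) :
    geometricEntropy t ≤ 1 + log (t + 1 / 2) := by
  have hmid := integral_log_le_midpoint (m := t + 1 / 2) (h := 1 / 2) (by norm_num) (by linarith)
  rw [add_sub_cancel_right, add_assoc, add_halves, mul_one_div_cancel two_ne_zero, one_mul] at hmid
  rw [geometricEntropy_eq_one_add_integral_log]
  exact add_le_add_right hmid 1

theorem one_add_log_sub_le_geometricEntropy (ht : 0 < t) :
    1 + log (t + 1 / 2) - 1 / (24 * (t * (t + 1))) ≤ geometricEntropy t := by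
  have hmid :=
    midpoint_sub_le_integral_log (m := t + 1 / 2) (h := 1 / 2) (by norm_num) (by linarith)
  have herror : (1 / 2 : ℝ) ^ 3 / (3 * ((t + 1 / 2) ^ 2 - (1 / 2) ^ 2)) =
      1 / (24 * (t * (t + 1))) := by
    rw [show (t + 1 / 2) ^ 2 - (1 / 2) ^ 2 = t * (t + 1) by ring]
    field_simp
    norm_num
  rw [herror, add_sub_cancel_right, add_assoc, add_halves, mul_one_div_cancel two_ne_zero,
    one_mul] at hmid
  rw [geometricEntropy_eq_one_add_integral_log]
  linarith

theorem exp_geometricEntropy_le_exp_one_mul (ht : 0 < t) :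
    exp (geometricEntropy t) ≤ exp 1 * (t + 1 / 2) :=
  calc exp (geometricEntropy t) ≤ exp (1 + log (t + 1 / 2)) :=
        exp_le_exp.2 (geometricEntropy_le_one_add_log ht)
    _ = exp 1 * (t + 1 / 2) := by rw [exp_add, exp_log (by positivity)]

theorem exp_one_mul_sub_le_exp_geometricEntropy (ht : 0 < t) :
    exp 1 * (t + 1 / 2 - 1 / (24 * t)) ≤ exp (geometricEntropy t) := by
  set δ := 1 / (24 * (t * (t + 1))) with hδ
  have hmul : (t + 1 / 2) * δ ≤ 1 / (24 * t) :=
    calc (t + 1 / 2) * δ ≤ (t + 1) * δ := by gcongr; norm_num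
      _ = 1 / (24 * t) := by rw [hδ]; field_simp
  calc exp 1 * (t + 1 / 2 - 1 / (24 * t)) ≤ exp 1 * ((t + 1 / 2) * (-δ + 1)) := by
        gcongr
        linarith
    _ ≤ exp 1 * ((t + 1 / 2) * exp (-δ)) := by
        gcongr
        exact add_one_le_exp _
    _ = exp (1 + log (t + 1 / 2) - δ) := by
        rw [sub_eq_add_neg, exp_add, exp_add, exp_log (by positivity), mul_assoc]
    _ ≤ exp (geometricEntropy t) := exp_le_exp.2 (one_add_log_sub_le_geometricEntropy ht)

theorem exp_one_div_rpow_le_exp_geometricEntropy (ht : 0 < t) :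
    (exp 1 / t) ^ t ≤ exp (geometricEntropy t) := by
  rw [rpow_def_of_pos (by positivity), log_div (exp_ne_zero 1) ht.ne', log_exp, exp_le_exp,
    geometricEntropy]
  linarith [self_sub_one_le_mul_log (x := t + 1) (by positivity)]

theorem concaveOn_exp_geometricEntropy :
    ConcaveOn ℝ (Ici 0) fun t ↦ exp (geometricEntropy t) := by
  have hcont : Continuous geometricEntropy :=
    (continuous_add_const 1).mul_log.sub continuous_mul_log
  have hpos : ∀ t ∈ interior (Ici (0 : ℝ)), 0 < t := fun t ht ↦ by
    rwa [interior_Ici, mem_Ioi] at ht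
  refine concaveOn_exp_comp_of_hasDerivWithinAt2 (convex_Ici 0) hcont.continuousOn
    (f' := fun t ↦ log (t + 1) - log t) (f'' := fun t ↦ (t + 1)⁻¹ - t⁻¹) ?_ ?_ ?_
  · intro t ht
    have ht' := hpos t ht
    refine HasDerivAt.hasDerivWithinAt ?_
    refine (((hasDerivAt_mul_log (by positivity)).comp_add_const t 1).sub
      (hasDerivAt_mul_log ht'.ne')).congr_deriv ?_
    ring
  · intro t ht
    have ht' := hpos t ht
    exact (((hasDerivAt_log (by positivity)).comp_add_const t 1).sub
      (hasDerivAt_log ht'.ne')).hasDerivWithinAt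
  · intro t ht
    have ht' := hpos t ht
    have hmean := sq_log_sub_log_le (a := t + 1) (b := t) (by positivity) ht'
    calc (log (t + 1) - log t) ^ 2 + ((t + 1)⁻¹ - t⁻¹)
        ≤ (t + 1 - t) ^ 2 / ((t + 1) * t) + ((t + 1)⁻¹ - t⁻¹) := by gcongr
      _ = 0 := by field_simp; ring

theorem exp_one_mul_add_one_le_exp_geometricEntropy (ht : 0 ≤ t) :
    exp 1 * t + 1 ≤ exp (geometricEntropy t) := by
  have hzero : exp (geometricEntropy 0) = 1 := by simp [geometricEntropy]
  have hline : ∀ᶠ s in atTop, exp 1 * s + 0 ≤ exp (geometricEntropy s) := by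
    filter_upwards [eventually_ge_atTop 1] with s hs
    have hs' : 1 / (24 * s) ≤ 1 / 2 := by gcongr; linarith
    calc exp 1 * s + 0 ≤ exp 1 * (s + 1 / 2 - 1 / (24 * s)) := by
          rw [add_zero]
          gcongr
          linarith
      _ ≤ exp (geometricEntropy s) := exp_one_mul_sub_le_exp_geometricEntropy (by positivity)
  have hgrowth := add_mul_sub_le_of_concaveOn_Ici concaveOn_exp_geometricEntropy hline ht
  rw [hzero, sub_zero] at hgrowth
  linarith

end

/-- **Lemma (basic entropy bounds).** For every real `t > 0`:
`e·(t + 1/2) ≥ (t+1)^{t+1}/t^t`,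
`(t+1)^{t+1}/t^t ≥ e·(t + 1/2 − 1/(24t))`,
`(t+1)^{t+1}/t^t ≥ (e/t)^t`, and
`(t+1)^{t+1}/t^t ≥ e·t + 1`
(real powers: `x^y = exp(y·log x)` for `x > 0`). -/
theorem basic_entropy_bounds (t : ℝ) (ht : 0 < t) :
    (t + 1) ^ (t + 1) / t ^ t ≤ Real.exp 1 * (t + 1 / 2) ∧
    Real.exp 1 * (t + 1 / 2 - 1 / (24 * t)) ≤ (t + 1) ^ (t + 1) / t ^ t ∧
    (Real.exp 1 / t) ^ t ≤ (t + 1) ^ (t + 1) / t ^ t ∧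
    Real.exp 1 * t + 1 ≤ (t + 1) ^ (t + 1) / t ^ t := by
  rw [← exp_geometricEntropy ht]
  exact ⟨exp_geometricEntropy_le_exp_one_mul ht, exp_one_mul_sub_le_exp_geometricEntropy ht,
    exp_one_div_rpow_le_exp_geometricEntropy ht,
    exp_one_mul_add_one_le_exp_geometricEntropy ht.le⟩
end

section
/- Let n ≥ 2 and let t be an integer with t ≥ n³/2. Then (n−1)! · binom(t+n−1, binom(n,2)) · ∏_{i=1}^{n−2} C_i ≥ K_n(t, 0, …, 0, −t) ≥ binom(t+n−1, binom(n,2)) · ∏_{i=1}^{n−2} C_i. -/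
open Finset

/-!
Write `k κ` for the number of flows on `k_{m+1}` with netflow `κ` at the non-sink vertices.
Averaging flow conservation over all flows, and comparing netflows that differ by one unit along
an edge, gives the Euler-type relation `∑ⱼ (κⱼ + 1 - j) k (κ + eⱼ) = (∑ⱼ κⱼ + m) k κ`.
At `κ = (t, 0, 1, …, m - 1)`, of length `m + 1`, only its first term survives, so that
`k (t, 0, 1, …, m - 1) = C(t + D, D) k (0, 1, …, m - 1)` with `D = C(m + 1, 2)`.
Superposing flows sandwiches `k (t, 0, …, 0)` between the values of this formula at `t - C(m, 2)`
and at `t`; for large `t` these differ by a factor of at most `m!`.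

The value `k (0, 1, …, m - 1)` is a product of Catalan numbers by an argument in the style of
Aomoto: the sums of `k` over the netflows `(0, 1, …, r - 1) + 1_S`, with `S` of a given size,
satisfy a first-order recurrence, which leads from `(0, 1, …, r - 1)` to `(1, 2, …, r)`.
-/

/-! ### Finite sums and binomial coefficients -/

theorem le_apply_add_sum {ι M β : Type*} [AddCommMonoid M] [Preorder β] {F : M → β} {v : ι → M}
    (h : ∀ x i, F x ≤ F (x + v i)) (x : M) (s : Finset ι) : F x ≤ F (x + ∑ i ∈ s, v i) := by
  classical
  induction s using Finset.induction_on with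
  | empty => simp
  | insert i s hi ih =>
    rw [sum_insert hi, add_comm (v i), ← add_assoc]
    exact ih.trans (h _ i)

theorem sum_fin_val_eq_choose_two (m : ℕ) : ∑ i : Fin m, (i : ℕ) = m.choose 2 := by
  rw [Fin.sum_univ_eq_sum_range (fun i => i), sum_range_id, Nat.choose_two_right]

theorem sum_card_filter_lt {α : Type*} [LinearOrder α] (s : Finset α) :
    ∑ j ∈ s, #{i ∈ s | i < j} = (#s).choose 2 := by
  induction s using Finset.induction_on_max with
  | empty => simp
  | insert a s ha ih =>
    have hnot : a ∉ s := fun h => lt_irrefl a (ha a h)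
    have hlow : ∀ j ∈ s, #{i ∈ insert a s | i < j} = #{i ∈ s | i < j} := fun j hj => by
      rw [filter_insert, if_neg (ha j hj).not_gt]
    have htop : #{i ∈ insert a s | i < a} = #s := by
      rw [filter_insert, if_neg (lt_irrefl a), filter_true_of_mem ha]
    rw [sum_insert hnot, htop, sum_congr rfl hlow, ih, card_insert_of_notMem hnot,
      Nat.choose_succ_succ' _ 1, Nat.choose_one_right]

theorem two_mul_cast_choose_two (n : ℕ) : 2 * (n.choose 2 : ℤ) = n * (n - 1) := by
  rw [← sum_fin_val_eq_choose_two, Fin.sum_univ_eq_sum_range (fun i => i), mul_comm]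
  rcases n with _ | n
  · simp
  · rw [Nat.cast_add_one, add_sub_cancel_right]
    exact_mod_cast sum_range_id_mul_two (n + 1)

theorem cast_choose_succ_mul (n k : ℕ) :
    (n.choose (k + 1) : ℤ) * (k + 1) = n.choose k * (n - k) := by
  have h := Nat.choose_succ_right_eq n k
  rcases le_or_gt k n with hkn | hnk
  · zify [hkn] at h
    exact h
  · simp [Nat.choose_eq_zero_of_lt hnk, Nat.choose_eq_zero_of_lt (hnk.trans k.lt_succ_self)]

theorem add_two_mul_catalan_succ (k : ℕ) :
    (k + 2) * catalan (k + 1) = 2 * (2 * k + 1) * catalan k := by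
  apply Nat.eq_of_mul_eq_mul_left (show 0 < k + 1 by omega)
  have h := Nat.succ_mul_centralBinom_succ k
  rw [← succ_mul_catalan_eq_centralBinom, ← succ_mul_catalan_eq_centralBinom] at h
  linear_combination h

theorem sum_powersetCard_succ_sum_mem {α M : Type*} [DecidableEq α] [AddCommMonoid M]
    (s : Finset α) (k : ℕ) (G : α → Finset α → M) :
    ∑ U ∈ powersetCard (k + 1) s, ∑ i ∈ U, G i U =
      ∑ R ∈ powersetCard k s, ∑ i ∈ s \ R, G i (insert i R) := by
  rw [sum_sigma', sum_sigma']
  refine sum_nbij' (fun p => ⟨p.1.erase p.2, p.2⟩) (fun p => ⟨insert p.2 p.1, p.2⟩) ?_ ?_ ?_ ?_ ?_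
  · rintro ⟨U, i⟩ h
    simp only [mem_sigma, mem_powersetCard, mem_sdiff] at h ⊢
    exact ⟨⟨(erase_subset _ _).trans h.1.1, by rw [card_erase_of_mem h.2, h.1.2]; rfl⟩,
      h.1.1 h.2, notMem_erase _ _⟩
  · rintro ⟨R, i⟩ h
    simp only [mem_sigma, mem_powersetCard, mem_sdiff] at h ⊢
    exact ⟨⟨insert_subset h.2.1 h.1.1, by rw [card_insert_of_notMem h.2.2, h.1.2]⟩,
      mem_insert_self _ _⟩
  · rintro ⟨U, i⟩ h
    simp only [mem_sigma] at h
    simp only [insert_erase h.2]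
  · rintro ⟨R, i⟩ h
    simp only [mem_sigma, mem_sdiff] at h
    simp only [erase_insert h.2.2]
  · rintro ⟨U, i⟩ h
    simp only [mem_sigma] at h
    simp only [insert_erase h.2]

theorem sum_filter_mem_powersetCard_swap {α M : Type*} [Fintype α] [DecidableEq α]
    [AddCommMonoid M] (i j : α) (k : ℕ) (F : Finset α → M) :
    ∑ S ∈ powersetCard k univ with i ∈ S, F S =
      ∑ S ∈ powersetCard k univ with j ∈ S, F (S.map (Equiv.swap i j).toEmbedding) := by
  symm
  refine sum_equiv (Equiv.swap i j).finsetCongr (fun S => ?_) (fun S _ => rfl)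
  simp [mem_powersetCard]

theorem sum_sum_mem_eq_sum_sum_filter {α M : Type*} [Fintype α] [DecidableEq α] [AddCommMonoid M]
    (A : Finset (Finset α)) (G : α → Finset α → M) :
    ∑ S ∈ A, ∑ i ∈ S, G i S = ∑ i, ∑ S ∈ A with i ∈ S, G i S :=
  sum_comm' fun S i => by simp [and_comm]

theorem map_swap_of_mem {α : Type*} [DecidableEq α] {i j : α} {S : Finset α} (hi : i ∈ S)
    (hj : j ∈ S) : S.map (Equiv.swap i j).toEmbedding = S := by
  ext a
  rw [mem_map_equiv, Equiv.symm_swap]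
  by_cases hai : a = i
  · simp [hai, hi, hj]
  by_cases haj : a = j
  · simp [haj, hi, hj]
  rw [Equiv.swap_apply_of_ne_of_ne hai haj]

/-! ### Superposition of flows -/

section Flows

variable {n : ℕ} {N M : Fin (n + 1) → ℤ} {f g : Fin (n + 1) → Fin (n + 1) → ℕ}

theorem isIntFlow_iff : IsIntFlow n N f ↔
    (∀ i j, j ≤ i → f i j = 0) ∧ ∀ i, ∑ j, (f i j : ℤ) - ∑ k, (f k i : ℤ) = N i := by
  simp only [IsIntFlow, not_lt]
  refine and_congr_right fun h => forall_congr' fun i => ?_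
  have hdrop : ∀ a b, (if a < b then (f a b : ℤ) else 0) = f a b := fun a b =>
    ite_eq_left_iff.2 fun hab => by simp [h a b (not_lt.1 hab)]
  simp only [hdrop]

namespace IsIntFlow

theorem add (hf : IsIntFlow n N f) (hg : IsIntFlow n M g) : IsIntFlow n (N + M) (f + g) := by
  rw [isIntFlow_iff] at *
  refine ⟨fun i j h => by simp [hf.1 i j h, hg.1 i j h], fun i => ?_⟩
  simp only [Pi.add_apply, Nat.cast_add, sum_add_distrib]
  linear_combination hf.2 i + hg.2 i

theorem of_add_right (h : IsIntFlow n (N + M) (f + g)) (hg : IsIntFlow n M g) :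
    IsIntFlow n N f := by
  rw [isIntFlow_iff] at *
  refine ⟨fun i j hij => (Nat.add_eq_zero_iff.1 (h.1 i j hij)).1, fun i => ?_⟩
  have hi := h.2 i
  simp only [Pi.add_apply, Nat.cast_add, sum_add_distrib] at hi
  linear_combination hi - hg.2 i

theorem single {i j : Fin (n + 1)} (hij : i < j) (c : ℕ) :
    IsIntFlow n (Pi.single i (c : ℤ) - Pi.single j (c : ℤ)) (Pi.single i (Pi.single j c)) := by
  have happly : ∀ a b, (Pi.single i (Pi.single j c) : Fin (n + 1) → Fin (n + 1) → ℕ) a b =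
      if a = i then if b = j then c else 0 else 0 := fun a b => by
    simp only [Pi.single_apply, ite_apply, Pi.zero_apply]
  refine isIntFlow_iff.2 ⟨fun a b hba => ?_, fun a => ?_⟩
  · rw [happly, ite_eq_right_iff]
    rintro rfl
    exact if_neg (hba.trans_lt hij).ne
  · simp only [happly, Pi.sub_apply, Pi.single_apply, Nat.cast_ite, Nat.cast_zero, sum_ite_irrel,
      sum_ite_eq', mem_univ, if_true, sum_const_zero]

theorem sum_sum_sub_mul (hf : IsIntFlow n N f) :
    ∑ a : Fin (n + 1), ∑ b : Fin (n + 1), ((b : ℤ) - a) * f a b =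
      -∑ a : Fin (n + 1), (a : ℤ) * N a := by
  simp only [← (isIntFlow_iff.1 hf).2, mul_sub, sub_mul, sum_sub_distrib, mul_sum, neg_sub]
  rw [sum_comm (f := fun a b : Fin (n + 1) => (b : ℤ) * f a b)]

theorem apply_le (hf : IsIntFlow n N f) (i j : Fin (n + 1)) :
    (f i j : ℤ) ≤ -∑ a : Fin (n + 1), (a : ℤ) * N a := by
  have hle : ∀ a b : Fin (n + 1), (f a b : ℤ) ≤ ((b : ℤ) - a) * f a b := fun a b => by
    rcases lt_or_ge a b with hab | hba
    · have : (a : ℤ) < b := by exact_mod_cast hab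
      nlinarith [Int.natCast_nonneg (f a b)]
    · simp [(isIntFlow_iff.1 hf).1 a b hba]
  calc (f i j : ℤ) ≤ ∑ b, (f i b : ℤ) :=
        single_le_sum (f := fun b => (f i b : ℤ)) (fun b _ => by positivity) (mem_univ j)
    _ ≤ ∑ a, ∑ b, (f a b : ℤ) :=
        single_le_sum (f := fun a => ∑ b, (f a b : ℤ)) (fun a _ => by positivity) (mem_univ i)
    _ ≤ ∑ a : Fin (n + 1), ∑ b : Fin (n + 1), ((b : ℤ) - a) * f a b :=
        sum_le_sum fun a _ => sum_le_sum fun b _ => hle a b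
    _ = -∑ a : Fin (n + 1), (a : ℤ) * N a := hf.sum_sum_sub_mul

end IsIntFlow

instance finite_isIntFlow : Finite {f // IsIntFlow n N f} := by
  refine (Set.finite_Iic fun _ _ => (-∑ a : Fin (n + 1), (a : ℤ) * N a).toNat).subset ?_
  exact fun f hf i j => Int.ofNat_le.1 ((IsIntFlow.apply_le hf i j).trans (Int.self_le_toNat _))

noncomputable instance fintypeIsIntFlow : Fintype {f // IsIntFlow n N f} := Fintype.ofFinite _

theorem Kn_le_Kn_add (N : Fin (n + 1) → ℤ) (hg : IsIntFlow n M g) : Kn n N ≤ Kn n (N + M) :=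
  Nat.card_le_card_of_injective (fun f => ⟨f.1 + g, f.2.add hg⟩) fun _ _ h =>
    Subtype.ext (add_right_cancel (congrArg Subtype.val h))

theorem isIntFlow_cons_zero_iff {f : Fin (n + 2) → Fin (n + 2) → ℕ} :
    IsIntFlow (n + 1) (Fin.cons 0 N) f ↔
      f 0 = 0 ∧ (∀ i, f i 0 = 0) ∧ IsIntFlow n N fun i j => f i.succ j.succ := by
  rw [isIntFlow_iff, isIntFlow_iff]
  constructor
  · rintro ⟨hvanish, hcons⟩
    have hcol : ∀ i, f i 0 = 0 := fun i => hvanish i 0 (Fin.zero_le i)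
    have hrow : f 0 = 0 := by
      have h := hcons 0
      simp only [hcol, Nat.cast_zero, sum_const_zero, sub_zero, Fin.cons_zero] at h
      exact funext fun j => (sum_eq_zero_iff.1 (by exact_mod_cast h)) j (mem_univ j)
    refine ⟨hrow, hcol, fun i j hji => hvanish _ _ (Fin.succ_le_succ_iff.2 hji), fun i => ?_⟩
    simpa [Fin.sum_univ_succ, hrow, hcol] using hcons i.succ
  · rintro ⟨hrow, hcol, hvanish, hcons⟩
    refine ⟨Fin.cases (fun j _ => congrFun hrow j) fun i => Fin.cases (fun _ => hcol _) fun j hji =>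
      hvanish i j (Fin.succ_le_succ_iff.1 hji), Fin.cases ?_ fun i => ?_⟩
    · simp [hrow, hcol]
    · simpa [Fin.sum_univ_succ, hrow, hcol] using hcons i

theorem Kn_cons_zero (N : Fin (n + 1) → ℤ) : Kn (n + 1) (Fin.cons 0 N) = Kn n N :=
  Nat.card_congr
    { toFun f := ⟨fun i j => f.1 i.succ j.succ, (isIntFlow_cons_zero_iff.1 f.2).2.2⟩
      invFun g := ⟨Fin.cons 0 fun i => Fin.cons 0 (g.1 i),
        isIntFlow_cons_zero_iff.2 ⟨rfl, Fin.cases rfl fun _ => rfl, g.2⟩⟩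
      left_inv f := by
        obtain ⟨hrow, hcol, -⟩ := isIntFlow_cons_zero_iff.1 f.2
        exact Subtype.ext (funext (Fin.cases hrow.symm fun i =>
          funext (Fin.cases (hcol i.succ).symm fun _ => rfl)))
      right_inv _ := rfl }

/-- The total flow through the edge `(i, j)`, summed over all flows with netflow `N`. -/
noncomputable def totalFlow (n : ℕ) (N : Fin (n + 1) → ℤ) (i j : Fin (n + 1)) : ℕ :=
  ∑ f : {f // IsIntFlow n N f}, f.1 i j

theorem totalFlow_of_le (N : Fin (n + 1) → ℤ) {i j : Fin (n + 1)} (h : j ≤ i) :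
    totalFlow n N i j = 0 :=
  sum_eq_zero fun f _ => (isIntFlow_iff.1 f.2).1 i j h

theorem sum_totalFlow_sub (N : Fin (n + 1) → ℤ) (i : Fin (n + 1)) :
    ∑ j, (totalFlow n N i j : ℤ) - ∑ k, (totalFlow n N k i : ℤ) = N i * Kn n N := by
  simp only [totalFlow, Nat.cast_sum]
  rw [sum_comm, sum_comm (s := univ (α := Fin (n + 1))), ← sum_sub_distrib,
    sum_congr rfl fun f _ => (isIntFlow_iff.1 f.2).2 i]
  simp [Kn, Nat.card_eq_fintype_card, mul_comm]

theorem totalFlow_add_single_sub_single (N : Fin (n + 1) → ℤ) {i j : Fin (n + 1)} (hij : i < j) :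
    totalFlow n (N + (Pi.single i 1 - Pi.single j 1)) i j = totalFlow n N i j + Kn n N := by
  have hunit := IsIntFlow.single hij 1
  rw [Nat.cast_one] at hunit
  set u : Fin (n + 1) → Fin (n + 1) → ℕ := Pi.single i (Pi.single j 1) with hu
  have huij : u i j = 1 := by simp [hu]
  have hle : ∀ g : Fin (n + 1) → Fin (n + 1) → ℕ, g i j ≠ 0 → u ≤ g := fun g hg a b => by
    by_cases ha : a = i
    · subst ha
      by_cases hb : b = j
      · subst hb
        rw [huij]
        exact Nat.one_le_iff_ne_zero.2 hg
      · simp [hu, hb]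
    · simp [hu, ha]
  calc totalFlow n (N + (Pi.single i 1 - Pi.single j 1)) i j
      = ∑ f : {f // IsIntFlow n N f}, (f.1 i j + 1) := by
        symm
        refine Fintype.sum_of_injective (fun f => ⟨f.1 + u, f.2.add hunit⟩)
          (fun _ _ h => Subtype.ext (add_right_cancel (congrArg Subtype.val h))) _ _
          (fun g hg => ?_) (fun f => by simp [huij])
        by_contra hne
        have hsub := tsub_add_cancel_of_le (hle g.1 hne)
        exact hg ⟨⟨g.1 - u, .of_add_right (hsub.symm ▸ g.2) hunit⟩, Subtype.ext hsub⟩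
    _ = totalFlow n N i j + Kn n N := by
        simp [sum_add_distrib, totalFlow, Kn, Nat.card_eq_fintype_card]

end Flows

/-! ### The partition function of the netflow at the non-sink vertices -/

section Kostant

variable {m : ℕ}

theorem extend_add (κ μ : Fin m → ℤ) : extend m (κ + μ) = extend m κ + extend m μ := by
  funext a
  refine Fin.lastCases ?_ (fun a => ?_) a
  · simp [extend, sum_add_distrib, add_comm]
  · simp [extend]

theorem extend_single (i : Fin m) (c : ℤ) :
    extend m (Pi.single i c) = Pi.single i.castSucc c - Pi.single (Fin.last m) c := by
  funext a
  refine Fin.lastCases ?_ (fun a => ?_) a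
  · simp [extend]
  · simp [extend, Pi.single_apply]

theorem extend_single_sub_single (i j : Fin m) (c : ℤ) :
    extend m (Pi.single i c - Pi.single j c) =
      Pi.single i.castSucc c - Pi.single j.castSucc c := by
  funext a
  refine Fin.lastCases ?_ (fun a => ?_) a
  · simp [extend]
  · simp [extend, Pi.single_apply]

theorem extend_cons_zero (κ : Fin m → ℤ) :
    extend (m + 1) (Fin.cons 0 κ) = Fin.cons 0 (extend m κ) := by
  rw [extend, extend, Fin.cons_snoc_eq_snoc_cons, Fin.sum_cons, zero_add]

/-- The Kostant partition function as a function of the netflow `κ` at the non-sink vertices. -/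
noncomputable def kostant (κ : Fin m → ℤ) : ℕ := Kn m (extend m κ)

/-- The total flow through the edge between the non-sink vertices `i` and `j`, summed over all flows
with netflow `κ` at the non-sink vertices. -/
noncomputable def innerFlow (κ : Fin m → ℤ) (i j : Fin m) : ℕ :=
  totalFlow m (extend m κ) i.castSucc j.castSucc

/-- The total flow through the edge from `i` to the sink, summed over all flows with netflow `κ` at
the non-sink vertices. -/
noncomputable def sinkFlow (κ : Fin m → ℤ) (i : Fin m) : ℕ :=
  totalFlow m (extend m κ) i.castSucc (Fin.last m)

theorem kostant_fin_zero (κ : Fin 0 → ℤ) : kostant κ = 1 := by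
  refine Nat.card_eq_one_iff_unique.2 ⟨⟨fun f g => Subtype.ext ?_⟩, ⟨0, isIntFlow_iff.2 ⟨?_, ?_⟩⟩⟩
  · funext i j
    have hji : j ≤ i := (Subsingleton.elim (α := Fin 1) j i).le
    rw [(isIntFlow_iff.1 f.2).1 i j hji, (isIntFlow_iff.1 g.2).1 i j hji]
  · exact fun i j _ => rfl
  · exact fun i => by simp [extend, Fin.snoc]

theorem kostant_cons_zero (κ : Fin m → ℤ) :
    kostant (Fin.cons 0 κ : Fin (m + 1) → ℤ) = kostant κ := by
  rw [kostant, extend_cons_zero, Kn_cons_zero, kostant]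

theorem kostant_le_kostant_add_single (κ : Fin m → ℤ) (i : Fin m) (c : ℕ) :
    kostant κ ≤ kostant (κ + Pi.single i (c : ℤ)) := by
  rw [kostant, kostant, extend_add, extend_single]
  exact Kn_le_Kn_add _ (.single i.castSucc_lt_last c)

theorem kostant_le_kostant_add_single_sub_single (κ : Fin m → ℤ) {i j : Fin m} (hij : i < j)
    (c : ℕ) : kostant κ ≤ kostant (κ + (Pi.single i (c : ℤ) - Pi.single j (c : ℤ))) := by
  rw [kostant, kostant, extend_add, extend_single_sub_single]
  exact Kn_le_Kn_add _ (.single (Fin.castSucc_lt_castSucc_iff.2 hij) c)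

theorem kostant_le_kostant_add (κ : Fin m → ℤ) (c : Fin m → ℕ) :
    kostant κ ≤ kostant (κ + fun i => (c i : ℤ)) := by
  rw [← univ_sum_single fun i => (c i : ℤ)]
  exact le_apply_add_sum (fun κ i => kostant_le_kostant_add_single κ i (c i)) κ univ

theorem kostant_cons_le_kostant_cons_add_sum (s : ℤ) (κ : Fin m → ℤ) (c : Fin m → ℕ) :
    kostant (Fin.cons s (κ + fun i => (c i : ℤ)) : Fin (m + 1) → ℤ) ≤
      kostant (Fin.cons (s + ∑ i, (c i : ℤ)) κ : Fin (m + 1) → ℤ) := by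
  refine (le_apply_add_sum (fun κ i => kostant_le_kostant_add_single_sub_single κ
    (Fin.succ_pos i) (c i)) _ univ).trans_eq (congrArg kostant ?_)
  funext a
  refine Fin.cases ?_ (fun a => ?_) a
  · simp [Fin.succ_ne_zero]
  · simp [Pi.single_apply]

theorem innerFlow_of_le (κ : Fin m → ℤ) {i j : Fin m} (h : j ≤ i) : innerFlow κ i j = 0 :=
  totalFlow_of_le _ (Fin.castSucc_le_castSucc_iff.2 h)

theorem innerFlow_add_single_sub_single (κ : Fin m → ℤ) {i j : Fin m} (hij : i < j) :
    innerFlow (κ + (Pi.single i 1 - Pi.single j 1)) i j = innerFlow κ i j + kostant κ := by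
  rw [innerFlow, extend_add, extend_single_sub_single]
  exact totalFlow_add_single_sub_single _ (Fin.castSucc_lt_castSucc_iff.2 hij)

theorem sinkFlow_add_single (κ : Fin m → ℤ) (i : Fin m) :
    sinkFlow (κ + Pi.single i 1) i = sinkFlow κ i + kostant κ := by
  rw [sinkFlow, extend_add, extend_single]
  exact totalFlow_add_single_sub_single _ i.castSucc_lt_last

theorem mul_kostant (κ : Fin m → ℤ) (i : Fin m) :
    κ i * kostant κ =
      sinkFlow κ i + (∑ j, (innerFlow κ i j : ℤ) - ∑ j, (innerFlow κ j i : ℤ)) := by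
  have hcons := sum_totalFlow_sub (extend m κ) i.castSucc
  rw [Fin.sum_univ_castSucc, Fin.sum_univ_castSucc, totalFlow_of_le _ (Fin.le_last _)] at hcons
  simp only [extend, Fin.snoc_castSucc] at hcons
  simp only [kostant, sinkFlow, innerFlow, extend]
  linear_combination -hcons

theorem sum_sinkFlow (κ : Fin m → ℤ) :
    ∑ i, (sinkFlow κ i : ℤ) = (∑ i, κ i) * kostant κ := by
  simp only [sum_mul, mul_kostant, sum_add_distrib, sum_sub_distrib]
  rw [sum_comm (f := fun i j => (innerFlow κ i j : ℤ)), sub_self, add_zero]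

theorem innerFlow_add_single (κ : Fin m → ℤ) {i j : Fin m} (hij : i < j) :
    innerFlow (κ + Pi.single i 1) i j =
      innerFlow (κ + Pi.single j 1) i j + kostant (κ + Pi.single j 1) := by
  rw [← innerFlow_add_single_sub_single _ hij]
  congr 1
  abel

theorem sum_innerFlow_add_single_sub (κ : Fin m → ℤ) (j : Fin m) :
    ∑ i, ((innerFlow (κ + Pi.single i 1) i j : ℤ) - innerFlow (κ + Pi.single j 1) i j) =
      j * kostant (κ + Pi.single j 1) := by
  have hterm : ∀ i, (innerFlow (κ + Pi.single i 1) i j : ℤ) - innerFlow (κ + Pi.single j 1) i j =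
      if i < j then (kostant (κ + Pi.single j 1) : ℤ) else 0 := fun i => by
    split_ifs with hij
    · rw [innerFlow_add_single κ hij]
      push_cast
      ring
    · simp [innerFlow_of_le _ (not_lt.1 hij)]
  rw [sum_congr rfl fun i _ => hterm i, ← sum_filter, filter_gt_eq_Iio, sum_const, Fin.card_Iio,
    nsmul_eq_mul]

theorem sum_mul_kostant_add_single (κ : Fin m → ℤ) :
    ∑ j : Fin m, (κ j + 1 - j) * kostant (κ + Pi.single j 1) = (∑ j, κ j + m) * kostant κ := by
  have hcons : ∀ j, (κ j + 1) * kostant (κ + Pi.single j 1) = sinkFlow κ j + kostant κ +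
      (∑ l, (innerFlow (κ + Pi.single j 1) j l : ℤ) -
        ∑ l, (innerFlow (κ + Pi.single j 1) l j : ℤ)) := fun j => by
    have h := mul_kostant (κ + Pi.single j 1) j
    rw [sinkFlow_add_single] at h
    simpa using h
  simp only [sub_mul _ (Fin.val _ : ℤ), sum_sub_distrib, hcons, ← sum_innerFlow_add_single_sub,
    sum_add_distrib, sum_sinkFlow]
  have hswap : ∑ j, ∑ l, (innerFlow (κ + Pi.single j 1) j l : ℤ) =
      ∑ l, ∑ j, (innerFlow (κ + Pi.single j 1) j l : ℤ) := sum_comm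
  rw [hswap, sum_const, card_univ, Fintype.card_fin, nsmul_eq_mul]
  ring

end Kostant

/-! ### Staircase netflows -/

section Staircase

/-- The netflow `(a, a + 1, …, a + m - 1)`. -/
def staircase (m : ℕ) (a : ℤ) : Fin m → ℤ := fun i => i + a

theorem cons_staircase (m : ℕ) (a : ℤ) :
    (Fin.cons a (staircase m (a + 1)) : Fin (m + 1) → ℤ) = staircase (m + 1) a := by
  funext i
  refine Fin.cases ?_ (fun i => ?_) i
  · simp [staircase]
  · simp only [Fin.cons_succ, staircase, Fin.val_succ, Nat.cast_add_one]
    ring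

theorem sum_staircase (m : ℕ) (a : ℤ) : ∑ i, staircase m a i = m.choose 2 + m * a := by
  simp only [staircase, sum_add_distrib, ← sum_fin_val_eq_choose_two]
  simp

theorem succ_mul_kostant_cons_staircase (m : ℕ) (t : ℤ) :
    (t + 1) * kostant (Fin.cons (t + 1) (staircase m 0) : Fin (m + 1) → ℤ) =
      (t + (m + 1).choose 2 + 1) * kostant (Fin.cons t (staircase m 0) : Fin (m + 1) → ℤ) := by
  have heuler := sum_mul_kostant_add_single (Fin.cons t (staircase m 0) : Fin (m + 1) → ℤ)
  have hcons : (Fin.cons t (staircase m 0) + Pi.single 0 1 : Fin (m + 1) → ℤ) =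
      Fin.cons (t + 1) (staircase m 0) := by
    funext i
    refine Fin.cases ?_ (fun i => ?_) i <;> simp
  have hvanish : ∀ j : Fin m, staircase m 0 j + 1 - (j.succ : ℕ) = 0 := by simp [staircase]
  rw [Fin.sum_univ_succ, Fin.sum_cons, sum_staircase] at heuler
  simp only [Fin.val_zero, Nat.cast_zero, sub_zero, Fin.cons_zero, Fin.cons_succ, hvanish,
    zero_mul, sum_const_zero, hcons] at heuler
  rw [Nat.choose_succ_succ' m 1, Nat.choose_one_right]
  push_cast at heuler ⊢
  linear_combination heuler

theorem kostant_cons_staircase (m t : ℕ) :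
    kostant (Fin.cons (t : ℤ) (staircase m 0) : Fin (m + 1) → ℤ) =
      (t + (m + 1).choose 2).choose ((m + 1).choose 2) * kostant (staircase m 0) := by
  induction t with
  | zero => simp [kostant_cons_zero]
  | succ t ih =>
    have hrec := succ_mul_kostant_cons_staircase m t
    have hchoose := Nat.choose_mul_succ_eq (t + (m + 1).choose 2) ((m + 1).choose 2)
    rw [ih] at hrec
    rw [show t + (m + 1).choose 2 + 1 - (m + 1).choose 2 = t + 1 by omega] at hchoose
    apply Nat.eq_of_mul_eq_mul_left t.succ_pos
    zify at hchoose ⊢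
    rw [hrec, Nat.add_right_comm t 1]
    push_cast
    linear_combination (kostant (staircase m 0) : ℤ) * hchoose

theorem kostant_cons_zero_le (m t : ℕ) :
    kostant (Fin.cons (t : ℤ) 0 : Fin (m + 1) → ℤ) ≤
      (t + (m + 1).choose 2).choose ((m + 1).choose 2) * kostant (staircase m 0) := by
  rw [← kostant_cons_staircase]
  refine (kostant_le_kostant_add _ (Fin.cons 0 fun i => (i : ℕ))).trans_eq (congrArg kostant ?_)
  funext i
  refine Fin.cases ?_ (fun i => ?_) i <;> simp [staircase]

theorem le_kostant_cons_zero (m t : ℕ) :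
    (t + m).choose ((m + 1).choose 2) * kostant (staircase m 0) ≤
      kostant (Fin.cons (t : ℤ) 0 : Fin (m + 1) → ℤ) := by
  have hD : (m + 1).choose 2 = m + m.choose 2 := by
    rw [Nat.choose_succ_succ' m 1, Nat.choose_one_right]
  rcases lt_or_ge t (m.choose 2) with hlt | hge
  · rw [Nat.choose_eq_zero_of_lt (by omega), zero_mul]
    exact Nat.zero_le _
  obtain ⟨s, rfl⟩ := Nat.exists_eq_add_of_le' hge
  calc (s + m.choose 2 + m).choose ((m + 1).choose 2) * kostant (staircase m 0)
      = kostant (Fin.cons (s : ℤ) (0 + fun i : Fin m => ((i : ℕ) : ℤ)) : Fin (m + 1) → ℤ) := by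
        have hstair : (0 + fun i : Fin m => ((i : ℕ) : ℤ)) = staircase m 0 := by
          funext i
          simp [staircase]
        rw [hstair, kostant_cons_staircase, show s + m.choose 2 + m = s + (m + 1).choose 2 by omega]
    _ ≤ kostant (Fin.cons (s + ∑ i : Fin m, ((i : ℕ) : ℤ)) 0 : Fin (m + 1) → ℤ) :=
        kostant_cons_le_kostant_cons_add_sum _ _ _
    _ = kostant (Fin.cons ((s + m.choose 2 : ℕ) : ℤ) 0 : Fin (m + 1) → ℤ) := by
        rw [← sum_fin_val_eq_choose_two]
        push_cast
        rfl

end Staircase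

/-! ### Raised staircases and Catalan numbers -/

section Raised

variable {r : ℕ}

/-- The staircase `(a, a + 1, …, a + r - 1)` with the entries at the positions in `S` increased by
one. These netflows interpolate between `staircase r a` and `staircase r (a + 1)`. -/
def raised (a : ℤ) (S : Finset (Fin r)) : Fin r → ℤ := fun i => i + a + if i ∈ S then 1 else 0

theorem raised_insert (a : ℤ) {S : Finset (Fin r)} {i : Fin r} (hi : i ∉ S) :
    raised a (insert i S) = raised a S + Pi.single i 1 := by
  funext b
  by_cases hb : b = i
  · subst hb
    simp [raised, hi]
  · simp [raised, hb]

theorem raised_map_swap (a : ℤ) {S : Finset (Fin r)} {i j : Fin r} (hi : i ∉ S) (hj : j ∈ S) :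
    raised a (S.map (Equiv.swap i j).toEmbedding) =
      raised a S + (Pi.single i 1 - Pi.single j 1) := by
  funext b
  simp only [raised, mem_map_equiv, Equiv.symm_swap, Pi.add_apply, Pi.sub_apply]
  by_cases hbi : b = i
  · subst hbi
    simp [hi, hj, ne_of_mem_of_not_mem hj hi |>.symm]
  by_cases hbj : b = j
  · subst hbj
    simp [hi, hj, hbi]
  · simp [Equiv.swap_apply_of_ne_of_ne hbi hbj, hbi, hbj]

theorem sum_raised (a : ℤ) (S : Finset (Fin r)) :
    ∑ i, raised a S i = r.choose 2 + r * a + #S := by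
  simp [raised, sum_add_distrib, ← sum_staircase, staircase]

/-- The sum of the Kostant partition function over the staircases with `k` raised entries. -/
noncomputable def raisedSum (r : ℕ) (a : ℤ) (k : ℕ) : ℕ :=
  ∑ S ∈ powersetCard k (univ : Finset (Fin r)), kostant (raised a S)

theorem raisedSum_zero_right (r : ℕ) (a : ℤ) : raisedSum r a 0 = kostant (staircase r a) := by
  simp only [raisedSum, powersetCard_zero, sum_singleton]
  congr 1
  funext i
  simp [raised, staircase]

theorem raisedSum_self (r : ℕ) (a : ℤ) : raisedSum r a r = kostant (staircase r (a + 1)) := by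
  have huniv : powersetCard r (univ : Finset (Fin r)) = {univ} := by
    simpa using powersetCard_self (univ : Finset (Fin r))
  simp only [raisedSum, huniv, sum_singleton]
  congr 1
  funext i
  simp [raised, staircase, add_assoc]

theorem sum_innerFlow_raised_sub (a : ℤ) (k : ℕ) (i j : Fin r) :
    ∑ S ∈ powersetCard k univ with i ∈ S, (innerFlow (raised a S) i j : ℤ) -
        ∑ S ∈ powersetCard k univ with j ∈ S, (innerFlow (raised a S) i j : ℤ) =
      ∑ S ∈ powersetCard k univ with j ∈ S,
        if i < j ∧ i ∉ S then (kostant (raised a S) : ℤ) else 0 := by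
  -- Exchanging `i` and `j` in `S` pairs up netflows differing by one unit along the edge `(i, j)`.
  rw [sum_filter_mem_powersetCard_swap i j, ← sum_sub_distrib]
  refine sum_congr rfl fun S hS => ?_
  have hj : j ∈ S := (mem_filter.1 hS).2
  rcases lt_or_ge i j with hij | hji
  · by_cases hi : i ∈ S
    · simp [map_swap_of_mem hi hj, hi]
    · rw [raised_map_swap a hi hj, innerFlow_add_single_sub_single _ hij]
      simp [hij, hi]
  · simp [innerFlow_of_le _ hji, hji.not_gt]

theorem sum_sum_innerFlow_raised_sub (a : ℤ) (k : ℕ) :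
    ∑ S ∈ powersetCard k (univ : Finset (Fin r)), ∑ i ∈ S,
        (∑ j, (innerFlow (raised a S) i j : ℤ) - ∑ j, (innerFlow (raised a S) j i : ℤ)) =
      ∑ S ∈ powersetCard k (univ : Finset (Fin r)),
        (∑ j ∈ S, (#{i ∈ Iio j | i ∉ S} : ℤ)) * kostant (raised a S) := by
  have hcount : ∀ (S : Finset (Fin r)) (j : Fin r),
      (#{i ∈ Iio j | i ∉ S} : ℤ) * kostant (raised a S) =
        ∑ i, if i < j ∧ i ∉ S then (kostant (raised a S) : ℤ) else 0 := fun S j => by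
    rw [← sum_filter, sum_const, nsmul_eq_mul, ← filter_gt_eq_Iio, filter_filter]
  simp only [sum_mul, hcount, sum_sub_distrib, sum_sum_mem_eq_sum_sum_filter]
  simp only [sum_comm (s := filter _ _), ← sum_innerFlow_raised_sub, sum_sub_distrib]
  rw [sum_comm]

theorem sum_val_sub_card_filter_notMem (S : Finset (Fin r)) :
    ∑ j ∈ S, ((j : ℤ) - #{i ∈ Iio j | i ∉ S}) = (#S).choose 2 := by
  rw [← sum_card_filter_lt S, Nat.cast_sum]
  refine sum_congr rfl fun j _ => ?_
  have hsplit := card_filter_add_card_filter_not (s := Iio j) (· ∈ S)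
  have hmem : {i ∈ Iio j | i ∈ S} = {i ∈ S | i < j} := by
    ext i
    simp [and_comm]
  rw [hmem, Fin.card_Iio] at hsplit
  rw [← hsplit]
  push_cast
  ring

theorem sum_sinkFlow_raised_mem (a : ℤ) (k : ℕ) :
    ∑ S ∈ powersetCard k (univ : Finset (Fin r)), ∑ i ∈ S, (sinkFlow (raised a S) i : ℤ) =
      (k * (a + 1) + k.choose 2) * raisedSum r a k := by
  have hsink : ∀ S : Finset (Fin r), ∀ i ∈ S, (sinkFlow (raised a S) i : ℤ) =
      (i + a + 1) * kostant (raised a S) -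
        (∑ j, (innerFlow (raised a S) i j : ℤ) - ∑ j, (innerFlow (raised a S) j i : ℤ)) :=
    fun S i hi => by
      rw [eq_sub_iff_add_eq, ← mul_kostant]
      simp [raised, hi]
  rw [sum_congr rfl fun S _ => (sum_congr rfl (hsink S)).trans (sum_sub_distrib _ _),
    sum_sub_distrib, sum_sum_innerFlow_raised_sub, ← sum_sub_distrib, raisedSum, Nat.cast_sum,
    mul_sum]
  refine sum_congr rfl fun S hS => ?_
  have hcard := (mem_powersetCard.1 hS).2
  have hcount := sum_val_sub_card_filter_notMem S
  rw [hcard, sum_sub_distrib] at hcount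
  rw [← sum_mul, ← sub_mul, ← hcount, sum_add_distrib, sum_add_distrib, sum_const, sum_const, hcard,
    nsmul_eq_mul, nsmul_eq_mul]
  ring

theorem sum_sinkFlow_raised_notMem (a : ℤ) (k : ℕ) :
    ∑ S ∈ powersetCard k (univ : Finset (Fin r)),
        ∑ i ∈ univ \ S, (sinkFlow (raised a S) i : ℤ) =
      (r * a + r.choose 2 - k * a - k.choose 2) * raisedSum r a k := by
  have htotal : ∑ S ∈ powersetCard k (univ : Finset (Fin r)), ∑ i, (sinkFlow (raised a S) i : ℤ) =
      (r.choose 2 + r * a + k) * raisedSum r a k := by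
    rw [raisedSum, Nat.cast_sum, mul_sum]
    refine sum_congr rfl fun S hS => ?_
    rw [sum_sinkFlow, sum_raised, (mem_powersetCard.1 hS).2]
  have hmem := sum_sinkFlow_raised_mem (r := r) a k
  rw [sum_congr rfl fun S _ => (sum_sdiff (subset_univ S)).symm, sum_add_distrib] at htotal
  linear_combination htotal - hmem

theorem succ_mul_raisedSum_succ (r : ℕ) (a : ℤ) (k : ℕ) :
    (k + 1) * (2 * a + k + 2) * raisedSum r a (k + 1) =
      (r - k) * (2 * a + r + k + 1) * raisedSum r a k := by
  have hinsert : ∑ S ∈ powersetCard k (univ : Finset (Fin r)),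
        ∑ i ∈ univ \ S, (sinkFlow (raised a (insert i S)) i : ℤ) =
      (r * a + r.choose 2 - k * a - k.choose 2) * raisedSum r a k + (r - k) * raisedSum r a k := by
    rw [← sum_sinkFlow_raised_notMem, raisedSum, Nat.cast_sum, mul_sum, ← sum_add_distrib]
    refine sum_congr rfl fun S hS => ?_
    have hcard : (#(univ \ S) : ℤ) = r - k := by
      rw [cast_card_sdiff (subset_univ S), card_univ, Fintype.card_fin, (mem_powersetCard.1 hS).2]
    rw [← hcard, ← nsmul_eq_mul, ← sum_const, ← sum_add_distrib]
    refine sum_congr rfl fun i hi => ?_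
    rw [raised_insert a (mem_sdiff.1 hi).2, sinkFlow_add_single, Nat.cast_add]
  have hmem := sum_sinkFlow_raised_mem (r := r) a (k + 1)
  rw [sum_powersetCard_succ_sum_mem, hinsert] at hmem
  have hk := two_mul_cast_choose_two k
  have hk' := two_mul_cast_choose_two (k + 1)
  have hr := two_mul_cast_choose_two r
  push_cast at hmem hk'
  linear_combination -2 * hmem - raisedSum r a (k + 1) * hk' + raisedSum r a k * (hr - hk)

theorem raisedSum_eq_choose_mul_catalan_mul (r k : ℕ) :
    raisedSum r 0 k = (r + k).choose (2 * k) * catalan k * kostant (staircase r 0) := by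
  induction k with
  | zero => simp [raisedSum_zero_right]
  | succ k ih =>
    have hrec := succ_mul_raisedSum_succ r 0 k
    have hcatalan := add_two_mul_catalan_succ k
    have hchoose := cast_choose_succ_mul (r + k) (2 * k)
    have hchoose' := Nat.add_one_mul_choose_eq (r + k) (2 * k + 1)
    rw [ih] at hrec
    apply Nat.eq_of_mul_eq_mul_left (show 0 < (k + 1) * (k + 2) by positivity)
    rw [show r + (k + 1) = r + k + 1 by ring, show 2 * (k + 1) = 2 * k + 1 + 1 by ring]
    zify at hcatalan hchoose' ⊢
    push_cast at hrec hchoose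
    linear_combination hrec
      - (k + 1) * (r + k + 1).choose (2 * k + 1 + 1) * kostant (staircase r 0) * hcatalan
      + (2 * k + 1) * catalan k * kostant (staircase r 0) * hchoose'
      - (r + k + 1) * catalan k * kostant (staircase r 0) * hchoose

theorem kostant_staircase_succ (r : ℕ) :
    kostant (staircase (r + 1) 0) = catalan r * kostant (staircase r 0) := by
  have hself := raisedSum_eq_choose_mul_catalan_mul r r
  rw [raisedSum_self, ← two_mul, Nat.choose_self, one_mul] at hself
  rw [← cons_staircase, kostant_cons_zero, hself]

theorem kostant_staircase_zero (m : ℕ) : kostant (staircase m 0) = ∏ i ∈ range m, catalan i := by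
  induction m with
  | zero => simp [kostant_fin_zero]
  | succ m ih => rw [kostant_staircase_succ, ih, prod_range_succ, mul_comm]

end Raised

/-! ### Numerical estimates -/

theorem succ_pow_le_pow_mul_succ {n q : ℕ} (hq : q ≤ n) : (n + 1) ^ q ≤ n ^ q * (q + 1) := by
  induction q with
  | zero => simp
  | succ q ih =>
    calc (n + 1) ^ (q + 1) = (n + 1) ^ q * (n + 1) := pow_succ _ _
      _ ≤ n ^ q * (q + 1) * (n + 1) := Nat.mul_le_mul_right _ (ih (by omega))
      _ = n ^ q * ((q + 1) * (n + 1)) := by ring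
      _ ≤ n ^ q * (n * (q + 1 + 1)) := Nat.mul_le_mul_left _ (by nlinarith)
      _ = n ^ (q + 1) * (q + 1 + 1) := by ring

theorem succ_pow_choose_two_le {n q : ℕ} (hq : q ≤ n + 1) :
    (n + 1) ^ q.choose 2 ≤ n ^ q.choose 2 * q.factorial := by
  induction q with
  | zero => simp
  | succ q ih =>
    rw [Nat.choose_succ_succ' q 1, Nat.choose_one_right, pow_add, pow_add, Nat.factorial_succ]
    calc (n + 1) ^ q * (n + 1) ^ q.choose 2
        ≤ n ^ q * (q + 1) * (n ^ q.choose 2 * q.factorial) :=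
          Nat.mul_le_mul (succ_pow_le_pow_mul_succ (by omega)) (ih (by omega))
      _ = n ^ q * n ^ q.choose 2 * ((q + 1) * q.factorial) := by ring

theorem mul_choose_succ_le {n d a : ℕ} (h : (n + 1) * d ≤ a + 1) :
    n * (a + 1).choose d ≤ (n + 1) * a.choose d := by
  cases d with
  | zero => simp
  | succ d =>
    have hratio : n * a.choose d ≤ a.choose (d + 1) := by
      refine Nat.le_of_mul_le_mul_right ?_ d.succ_pos
      have hsub : n * (d + 1) ≤ a - d := by
        rw [Nat.add_mul] at h
        omega
      calc n * a.choose d * (d + 1) = a.choose d * (n * (d + 1)) := by ring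
        _ ≤ a.choose d * (a - d) := Nat.mul_le_mul_left _ hsub
        _ = a.choose (d + 1) * (d + 1) := (Nat.choose_succ_right_eq a d).symm
    rw [Nat.choose_succ_succ']
    linarith

theorem pow_mul_choose_add_le {n d a : ℕ} (h : (n + 1) * d ≤ a + 1) (s : ℕ) :
    n ^ s * (a + s).choose d ≤ (n + 1) ^ s * a.choose d := by
  induction s with
  | zero => simp
  | succ s ih =>
    calc n ^ (s + 1) * (a + s + 1).choose d = n ^ s * (n * (a + s + 1).choose d) := by ring
      _ ≤ n ^ s * ((n + 1) * (a + s).choose d) :=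
        Nat.mul_le_mul_left _ (mul_choose_succ_le (by omega))
      _ = (n + 1) * (n ^ s * (a + s).choose d) := by ring
      _ ≤ (n + 1) * ((n + 1) ^ s * a.choose d) := Nat.mul_le_mul_left _ ih
      _ = (n + 1) ^ (s + 1) * a.choose d := by ring

theorem choose_add_choose_two_le {m t : ℕ} (ht : (m + 1) ^ 3 ≤ 2 * t) :
    (t + (m + 1).choose 2).choose ((m + 1).choose 2) ≤
      m.factorial * (t + m).choose ((m + 1).choose 2) := by
  have hD : (m + 1).choose 2 = m + m.choose 2 := by
    rw [Nat.choose_succ_succ' m 1, Nat.choose_one_right]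
  have hDmul : 2 * (m + 1).choose 2 = (m + 1) * m := by
    zify
    rw [two_mul_cast_choose_two, Nat.cast_add_one, add_sub_cancel_right]
  have hratio := pow_mul_choose_add_le (n := m + 1) (d := (m + 1).choose 2) (a := t + m)
    (by nlinarith) (m.choose 2)
  refine Nat.le_of_mul_le_mul_left (c := (m + 1) ^ m.choose 2) ?_ (by positivity)
  calc (m + 1) ^ m.choose 2 * (t + (m + 1).choose 2).choose ((m + 1).choose 2)
      ≤ (m + 1 + 1) ^ m.choose 2 * (t + m).choose ((m + 1).choose 2) := by
        rwa [show t + m + m.choose 2 = t + (m + 1).choose 2 by omega] at hratio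
    _ ≤ (m + 1) ^ m.choose 2 * m.factorial * (t + m).choose ((m + 1).choose 2) :=
        Nat.mul_le_mul_right _ (succ_pow_choose_two_le (by omega))
    _ = (m + 1) ^ m.choose 2 * (m.factorial * (t + m).choose ((m + 1).choose 2)) := by ring

theorem Kn_eq_kostant_cons_zero (m t : ℕ) :
    Kn (m + 1) (fun i => if (i : ℕ) = 0 then (t : ℤ) else if (i : ℕ) = m + 1 then -(t : ℤ) else 0) =
      kostant (Fin.cons (t : ℤ) 0 : Fin (m + 1) → ℤ) := by
  rw [kostant]
  congr 1
  funext a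
  refine Fin.lastCases ?_ (fun a => Fin.cases ?_ (fun a => ?_) a) a
  · simp [extend, Fin.sum_cons]
  · simp [extend]
  · rw [extend, Fin.snoc_castSucc, Fin.cons_succ]
    simp [a.2.ne]

theorem prod_Icc_one_catalan (m : ℕ) :
    ∏ i ∈ Icc 1 m, catalan i = ∏ i ∈ range (m + 1), catalan i := by
  rw [range_eq_Ico, prod_eq_prod_Ico_succ_bot m.succ_pos, catalan_zero, one_mul]
  rfl

/-- **Theorem (bounds from the Lidskii formula).** For `n ≥ 2` and integer
`t ≥ n³/2`,
`(n−1)! · C(t+n−1, C(n,2)) · ∏_{i=1}^{n−2} Cat_i ≥ K_n(t,0,…,0,−t)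
  ≥ C(t+n−1, C(n,2)) · ∏_{i=1}^{n−2} Cat_i`,
where `Cat_i` is the `i`-th Catalan number. -/
theorem kostant_CRY_Lidskii_bounds (n t : ℕ) (hn : 2 ≤ n) (ht : n ^ 3 ≤ 2 * t) :
    Kn n (fun i => if (i : ℕ) = 0 then (t : ℤ) else if (i : ℕ) = n then -(t : ℤ) else 0) ≤
        Nat.factorial (n - 1) * Nat.choose (t + n - 1) (Nat.choose n 2) *
          ∏ i ∈ Finset.Icc 1 (n - 2), catalan i ∧
    Nat.choose (t + n - 1) (Nat.choose n 2) * ∏ i ∈ Finset.Icc 1 (n - 2), catalan i ≤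
      Kn n (fun i =>
        if (i : ℕ) = 0 then (t : ℤ) else if (i : ℕ) = n then -(t : ℤ) else 0) := by
  obtain ⟨p, rfl⟩ := Nat.exists_eq_add_of_le' hn
  have hupper := kostant_cons_zero_le (p + 1) t
  have hlower := le_kostant_cons_zero (p + 1) t
  rw [← Kn_eq_kostant_cons_zero, kostant_staircase_zero, ← prod_Icc_one_catalan] at hupper hlower
  exact ⟨hupper.trans (Nat.mul_le_mul_right _ (choose_add_choose_two_le ht)), hlower⟩
end
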